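/- arXiv:1507.01712 — 7 statements merged into one kernel-verified Lean document; each statement's English description precedes it below -/
import Mathlib

section
/- For every integer n ≥ 1, all w₁, w₂ > 0 and every h ∈ ℝ, the function x ↦ u_{2n}(x,w₁) u_{2n}(h−x,w₂) is integrable on ℝ and ∫_ℝ u_{2n}(x,w₁) u_{2n}(h−x,w₂) dx = u_{2n}(h, w₁+w₂). -/
open MeasureTheory Set Real

/-- The even-order heat kernel `u_{2n}(x,w) = (1/(2π)) ∫_ℝ exp(−iξx − wξ^{2n}) dξ`. -/
noncomputable def u2n (n : ℕ) (x w : ℝ) : ℂ :=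
  ((2 * Real.pi)⁻¹ : ℝ) *
    ∫ ξ : ℝ, Complex.exp (-(Complex.I * ξ * x) - ((w * ξ ^ (2 * n) : ℝ) : ℂ))

open Polynomial in
lemma aux_mono (n : ℕ) (hn : 1 ≤ n) (w : ℝ) (hw : 0 < w) (k : ℕ) (x : ℝ) :
    |x| ^ k * Real.exp (-(w * x ^ (2 * n))) ≤ 1 + k.factorial / w ^ k := by
  have h0 : 0 ≤ x ^ (2 * n) := by rw [pow_mul]; positivity
  have he : Real.exp (-(w * x ^ (2 * n))) ≤ 1 := by
    rw [Real.exp_le_one_iff]; nlinarith [mul_nonneg hw.le h0]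
  have h1 : |x| ^ k ≤ 1 + (x ^ (2 * n)) ^ k := by
    have : x ^ (2 * n) = |x| ^ (2 * n) := by rw [pow_mul, pow_mul, sq_abs]
    rw [this, ← pow_mul]
    rcases le_total |x| 1 with h | h
    · have := pow_le_one₀ (n := k) (abs_nonneg x) h
      have : 0 ≤ |x| ^ (2 * n * k) := by positivity
      linarith
    · have := pow_le_pow_right₀ h (show k ≤ 2 * n * k by nlinarith)
      linarith
  have h2 := Real.pow_div_factorial_le_exp (x := w * x ^ (2 * n)) (by positivity) k
  have h3 : (x ^ (2 * n)) ^ k * Real.exp (-(w * x ^ (2 * n))) ≤ k.factorial / w ^ k := by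
    rw [Real.exp_neg, ← div_eq_mul_inv, div_le_div_iff₀ (Real.exp_pos _) (by positivity)]
    rw [div_le_iff₀ (by positivity), mul_pow] at h2
    linarith
  nlinarith [Real.exp_pos (-(w * x ^ (2 * n)))]

open Polynomial in
lemma aux_poly (n : ℕ) (hn : 1 ≤ n) (w : ℝ) (hw : 0 < w) (P : ℝ[X]) :
    ∃ C : ℝ, ∀ x : ℝ, |P.eval x| * Real.exp (-(w * x ^ (2 * n))) ≤ C := by
  induction P using Polynomial.induction_on' with
  | add p q hp hq =>
    obtain ⟨C, hC⟩ := hp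
    obtain ⟨D, hD⟩ := hq
    refine ⟨C + D, fun x => ?_⟩
    rw [eval_add]
    have := abs_add_le (p.eval x) (q.eval x)
    nlinarith [hC x, hD x, Real.exp_pos (-(w * x ^ (2 * n)))]
  | monomial k a =>
    refine ⟨|a| * (1 + k.factorial / w ^ k), fun x => ?_⟩
    rw [eval_monomial, abs_mul, abs_pow, mul_assoc]
    exact mul_le_mul_of_nonneg_left (aux_mono n hn w hw k x) (abs_nonneg a)

open Polynomial in
lemma aux_iter (n : ℕ) (w : ℝ) (k : ℕ) :
    ∃ P : ℝ[X], iteratedDeriv k (fun x : ℝ => ((Real.exp (-(w * x ^ (2 * n))) : ℝ) : ℂ)) =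
      fun x : ℝ => ((P.eval x * Real.exp (-(w * x ^ (2 * n))) : ℝ) : ℂ) := by
  induction k with
  | zero => exact ⟨1, by simp⟩
  | succ k ih =>
    obtain ⟨P, hP⟩ := ih
    refine ⟨derivative P - P * (C w * (C ((2 * n : ℕ) : ℝ) * X ^ (2 * n - 1))), ?_⟩
    rw [iteratedDeriv_succ, hP]
    funext x
    have h1 : HasDerivAt (fun x : ℝ => Real.exp (-(w * x ^ (2 * n))))
        (Real.exp (-(w * x ^ (2 * n))) * (-(w * (((2 * n : ℕ) : ℝ) * x ^ (2 * n - 1))))) x :=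
      (((hasDerivAt_pow (2 * n) x).const_mul w).neg).exp
    have h2 := ((P.hasDerivAt x).mul h1).ofReal_comp
    refine h2.deriv.trans ?_
    congr 1
    simp only [eval_sub, eval_mul, eval_C, eval_pow, eval_X]
    ring

noncomputable def auxS (n : ℕ) (hn : 1 ≤ n) (w : ℝ) (hw : 0 < w) : SchwartzMap ℝ ℂ where
  toFun := fun x : ℝ => ((Real.exp (-(w * x ^ (2 * n))) : ℝ) : ℂ)
  smooth' := by
    have : ContDiff ℝ ((⊤ : ℕ∞) : WithTop ℕ∞) (fun x : ℝ => Real.exp (-(w * x ^ (2 * n)))) := by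
      fun_prop
    exact Complex.ofRealCLM.contDiff.comp this
  decay' := by
    intro k m
    obtain ⟨P, hP⟩ := aux_iter n w m
    obtain ⟨C, hC⟩ := aux_poly n hn w hw (Polynomial.X ^ k * P)
    refine ⟨C, fun x => ?_⟩
    rw [norm_iteratedFDeriv_eq_norm_iteratedDeriv, hP]
    refine le_trans (le_of_eq ?_) (hC x)
    simp only [Complex.norm_real, Real.norm_eq_abs, Polynomial.eval_mul, Polynomial.eval_pow,
      Polynomial.eval_X, abs_mul, abs_pow, abs_of_pos (Real.exp_pos _)]
    ring

open FourierTransform in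
lemma aux_u (n : ℕ) (hn : 1 ≤ n) (w : ℝ) (hw : 0 < w) (x : ℝ) :
    u2n n x w = ((2 * Real.pi)⁻¹ : ℝ) * (𝓕 (auxS n hn w hw)) (x / (2 * Real.pi)) := by
  rw [u2n, SchwartzMap.fourier_coe, Real.fourier_real_eq_integral_exp_smul]
  congr 1
  refine integral_congr_ae (Filter.Eventually.of_forall fun ξ => ?_)
  simp only [smul_eq_mul]
  show _ = _ * ((Real.exp (-(w * ξ ^ (2 * n))) : ℝ) : ℂ)
  rw [Complex.ofReal_exp, ← Complex.exp_add]
  congr 1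
  push_cast
  have : (Real.pi : ℂ) ≠ 0 := by exact_mod_cast Real.pi_ne_zero
  field_simp
  ring

open FourierTransform in
lemma aux_conv (f g : SchwartzMap ℝ ℂ) (k : ℝ) :
    Integrable (fun y : ℝ => (𝓕 f) y * (𝓕 g) (k - y)) ∧
    ∫ y : ℝ, (𝓕 f) y * (𝓕 g) (k - y) =
      ∫ ξ : ℝ, Complex.exp (((-2 * Real.pi * ξ * k : ℝ) : ℂ) * Complex.I) * (f ξ * g ξ) := by
  have hg : Integrable (fun y : ℝ => (𝓕 g) (k - y)) := (𝓕 g).integrable.comp_sub_left k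
  constructor
  · obtain ⟨C, hC⟩ := (𝓕 f).decay 0 0
    refine hg.bdd_mul (c := C) (𝓕 f).continuous.aestronglyMeasurable
      (Filter.Eventually.of_forall fun x => ?_)
    simpa using hC.2 x
  · have h1 : ∫ y : ℝ, (𝓕 f) y * (𝓕 g) (k - y) =
        ∫ ξ : ℝ, f ξ * (𝓕 (fun y : ℝ => (𝓕 g) (k - y))) ξ := by
      simpa using! VectorFourier.integral_fourierIntegral_smul_eq_flip (L := innerₗ ℝ)
        Real.continuous_fourierChar continuous_inner f.integrable hg
    rw [h1]
    refine integral_congr_ae (Filter.Eventually.of_forall fun ξ => ?_)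
    have h2 : g ξ = ∫ v : ℝ, Complex.exp (((2 * Real.pi * (v * ξ) : ℝ) : ℂ) * Complex.I) *
        (𝓕 g) v := by
      have : g ξ = (𝓕⁻ (𝓕 g)) ξ := by rw [FourierTransform.fourierInv_fourier_eq]
      rw [this, SchwartzMap.fourierInv_coe, Real.fourierInv_eq']
      simp [mul_comm]
    simp only []
    rw [Real.fourier_real_eq_integral_exp_smul, h2, mul_left_comm]
    congr 1
    rw [← integral_sub_left_eq_self _ volume k, ← integral_const_mul]
    refine integral_congr_ae (Filter.Eventually.of_forall fun y => ?_)
    simp only [smul_eq_mul, sub_sub_cancel]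
    rw [← mul_assoc, ← Complex.exp_add]
    congr 2
    push_cast
    ring

open scoped FourierTransform

/-- Chapman–Kolmogorov (semigroup) property of the even-order heat kernels:
`∫_ℝ u_{2n}(x,w₁) u_{2n}(h−x,w₂) dx = u_{2n}(h, w₁+w₂)`. -/
theorem stmt2 (n : ℕ) (hn : 1 ≤ n) (w₁ w₂ : ℝ) (hw₁ : 0 < w₁) (hw₂ : 0 < w₂) (h : ℝ) :
    Integrable (fun x : ℝ => u2n n x w₁ * u2n n (h - x) w₂) ∧
    ∫ x : ℝ, u2n n x w₁ * u2n n (h - x) w₂ = u2n n h (w₁ + w₂) := by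
  have hpi : (0 : ℝ) < 2 * Real.pi := by positivity
  have hpi' : (Real.pi : ℂ) ≠ 0 := by exact_mod_cast Real.pi_ne_zero
  have hu : (fun x : ℝ => u2n n x w₁ * u2n n (h - x) w₂) = fun x : ℝ =>
      (fun y : ℝ => (((2 * Real.pi)⁻¹ : ℝ) : ℂ) ^ 2 * ((𝓕 (auxS n hn w₁ hw₁)) y *
        (𝓕 (auxS n hn w₂ hw₂)) (h / (2 * Real.pi) - y))) (x / (2 * Real.pi)) := by
    funext x
    simp only [aux_u n hn w₁ hw₁, aux_u n hn w₂ hw₂, sub_div]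
    ring
  have hk := aux_conv (auxS n hn w₁ hw₁) (auxS n hn w₂ hw₂) (h / (2 * Real.pi))
  rw [hu]
  refine ⟨(hk.1.const_mul _).comp_div hpi.ne', ?_⟩
  refine (Measure.integral_comp_div (F := ℂ) (fun y : ℝ => (((2 * Real.pi)⁻¹ : ℝ) : ℂ) ^ 2 *
    ((𝓕 (auxS n hn w₁ hw₁) : SchwartzMap ℝ ℂ) y *
      (𝓕 (auxS n hn w₂ hw₂) : SchwartzMap ℝ ℂ) (h / (2 * Real.pi) - y))) (2 * Real.pi)).trans ?_
  rw [integral_const_mul, hk.2,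
    aux_u n hn (w₁ + w₂) (by positivity), SchwartzMap.fourier_coe,
    Real.fourier_real_eq_integral_exp_smul, abs_of_pos hpi]
  have : ∀ ξ : ℝ, (auxS n hn (w₁ + w₂) (by positivity)) ξ
      = auxS n hn w₁ hw₁ ξ * auxS n hn w₂ hw₂ ξ := by
    intro ξ
    show ((Real.exp _ : ℝ) : ℂ) = ((Real.exp _ : ℝ) : ℂ) * ((Real.exp _ : ℝ) : ℂ)
    rw [← Complex.ofReal_mul, ← Real.exp_add]
    congr 2
    ring
  simp only [this, smul_eq_mul, Complex.real_smul]
  rw [← mul_assoc]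
  congr 1
  push_cast
  field_simp
end

section
/- Let n ≥ 1 be an integer, μ > 0, β > 0, σ > 0. For every τ ∈ ℝ, the function h ↦ e^{iτh} (σ²/Γ(2β)) ∫₀^∞ w^{2β−1} e^{−μw} u_{2n}(h,w) dw is integrable on ℝ and ∫_ℝ e^{iτh} [(σ²/Γ(2β)) ∫₀^∞ w^{2β−1} e^{−μw} u_{2n}(h,w) dw] dh = σ²/(μ + τ^{2n})^{2β}. (This is the spectral function of the solution to (μ + (−1)^n d^{2n}/dt^{2n})^β X(t) = E(t), where E is Gaussian white noise of intensity σ².) -/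
open MeasureTheory Set Real

open FourierTransform

lemma aux_bound (n : ℕ) (hn : 1 ≤ n) (x : ℝ) : x ^ 2 - 1 ≤ x ^ (2 * n) := by
  rw [pow_mul]
  have h0 : 0 ≤ x ^ 2 := sq_nonneg x
  rcases le_total 1 (x ^ 2) with h | h
  · have := le_self_pow₀ h (by lia : n ≠ 0)
    linarith
  · have : 0 ≤ (x ^ 2) ^ n := by positivity
    linarith

lemma aux_mom (n : ℕ) (hn : 1 ≤ n) (k : ℕ) :
    Integrable (fun x : ℝ => x ^ k * Real.exp (-x ^ (2 * n))) := by
  have h1 : Integrable (fun x : ℝ => x ^ (k : ℝ) * Real.exp (-1 * x ^ 2)) :=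
    integrable_rpow_mul_exp_neg_mul_sq one_pos (by have : (0 : ℝ) ≤ k := k.cast_nonneg; linarith)
  refine (h1.norm.const_mul (Real.exp 1)).mono' (by fun_prop) (Filter.Eventually.of_forall fun x => ?_)
  simp only [norm_mul, Real.norm_eq_abs, Real.abs_exp, Real.rpow_natCast]
  have h2 : Real.exp (-x ^ (2 * n)) ≤ Real.exp 1 * Real.exp (-1 * x ^ 2) := by
    rw [← Real.exp_add, Real.exp_le_exp]
    linarith [aux_bound n hn x]
  calc _ ≤ |x ^ k| * (Real.exp 1 * Real.exp (-1 * x ^ 2)) := by gcongr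
    _ = _ := by ring

noncomputable def gg (n : ℕ) (x : ℝ) : ℂ := ((Real.exp (-x ^ (2 * n)) : ℝ) : ℂ)

noncomputable def gg1 (n : ℕ) (x : ℝ) : ℂ :=
  ((-(2 * n : ℝ) * (x ^ (2 * n - 1) * Real.exp (-x ^ (2 * n))) : ℝ) : ℂ)

noncomputable def gg2 (n : ℕ) (x : ℝ) : ℂ :=
  ((-(2 * n : ℝ) * ((2 * n - 1 : ℕ) * (x ^ (2 * n - 1 - 1) * Real.exp (-x ^ (2 * n))) -
    (2 * n : ℝ) * (x ^ ((2 * n - 1) + (2 * n - 1)) * Real.exp (-x ^ (2 * n)))) : ℝ) : ℂ)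

lemma gg_int (n : ℕ) (hn : 1 ≤ n) : Integrable (gg n) := by
  have := aux_mom n hn 0
  simp only [pow_zero, one_mul] at this
  exact this.ofReal

lemma gg1_int (n : ℕ) (hn : 1 ≤ n) : Integrable (gg1 n) :=
  ((aux_mom n hn (2 * n - 1)).const_mul _).ofReal

lemma gg2_int (n : ℕ) (hn : 1 ≤ n) : Integrable (gg2 n) :=
  ((((aux_mom n hn (2 * n - 1 - 1)).const_mul _).sub
    ((aux_mom n hn ((2 * n - 1) + (2 * n - 1))).const_mul _)).const_mul _).ofReal

lemma aux_der (n : ℕ) (x : ℝ) : HasDerivAt (fun x : ℝ => Real.exp (-x ^ (2 * n)))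
    (-(2 * n : ℝ) * (x ^ (2 * n - 1) * Real.exp (-x ^ (2 * n)))) x := by
  have := ((hasDerivAt_pow (2 * n) x).neg).exp
  refine this.congr_deriv ?_
  simp only [Pi.neg_apply]
  push_cast
  ring

lemma gg_der (n : ℕ) (x : ℝ) : HasDerivAt (gg n) (gg1 n x) x :=
  (aux_der n x).ofReal_comp

lemma gg1_der (n : ℕ) (x : ℝ) : HasDerivAt (gg1 n) (gg2 n x) x := by
  refine HasDerivAt.ofReal_comp ?_
  have := ((hasDerivAt_pow (2 * n - 1) x).mul (aux_der n x)).const_mul (-(2 * n : ℝ))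
  refine this.congr_deriv ?_
  rw [pow_add]
  ring

lemma gg_F2 (n : ℕ) (hn : 1 ≤ n) (x : ℝ) :
    𝓕 (gg2 n) x = (2 * Real.pi * Complex.I * x) ^ 2 * 𝓕 (gg n) x := by
  have d1 : deriv (gg n) = gg1 n := funext fun x => (gg_der n x).deriv
  have d2 : deriv (gg1 n) = gg2 n := funext fun x => (gg1_der n x).deriv
  have e1 := Real.fourier_deriv (gg_int n hn) (fun x => (gg_der n x).differentiableAt)
    (by rw [d1]; exact gg1_int n hn)
  have e2 := Real.fourier_deriv (gg1_int n hn) (fun x => (gg1_der n x).differentiableAt)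
    (by rw [d2]; exact gg2_int n hn)
  rw [d1] at e1
  rw [d2] at e2
  rw [e2, e1]
  simp only [smul_eq_mul]
  ring

lemma gg_cont (n : ℕ) : Continuous (gg n) := by
  unfold gg; fun_prop

lemma F_le (f : ℝ → ℂ) (x : ℝ) : ‖𝓕 f x‖ ≤ ∫ v, ‖f v‖ :=
  VectorFourier.norm_fourierIntegral_le_integral_norm _ _ _ _ _

lemma gg_Fint (n : ℕ) (hn : 1 ≤ n) : Integrable (𝓕 (gg n)) := by
  have hm : Continuous (𝓕 (gg n)) :=
    VectorFourier.fourierIntegral_continuous Real.continuous_fourierChar (by fun_prop) (gg_int n hn)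
  refine (integrable_inv_one_add_sq.const_mul ((∫ v, ‖gg n v‖) + ∫ v, ‖gg2 n v‖)).mono'
    hm.aestronglyMeasurable (Filter.Eventually.of_forall fun x => ?_)
  have h1 := F_le (gg n) x
  have h2 := F_le (gg2 n) x
  rw [gg_F2 n hn, norm_mul] at h2
  have h3 : ‖(2 * Real.pi * Complex.I * x : ℂ) ^ 2‖ = (2 * Real.pi) ^ 2 * x ^ 2 := by
    simp [mul_pow, abs_of_pos Real.pi_pos]
  rw [h3] at h2
  have h4 : x ^ 2 * ‖𝓕 (gg n) x‖ ≤ (2 * Real.pi) ^ 2 * x ^ 2 * ‖𝓕 (gg n) x‖ := by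
    have : 1 ≤ (2 * Real.pi) ^ 2 := by nlinarith [Real.pi_gt_three]
    gcongr
    nlinarith [sq_nonneg x]
  rw [← div_eq_mul_inv, le_div_iff₀ (by positivity)]
  nlinarith

/-- the scaled kernel -/
lemma u2n_eq (n : ℕ) (s : ℝ) (hs : 0 < s) (x : ℝ) :
    u2n n x (s ^ (2 * n)) = ((2 * Real.pi * s)⁻¹ : ℝ) * 𝓕 (gg n) (x / (2 * Real.pi * s)) := by
  have hp := Real.pi_pos
  unfold u2n
  have h := Measure.integral_comp_mul_left
    (fun v : ℝ => Complex.exp ((-2 * Real.pi * v * (x / (2 * Real.pi * s)) : ℝ) * Complex.I) • gg n v) s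
  rw [Real.fourier_real_eq_integral_exp_smul]
  rw [abs_of_pos (by positivity : 0 < s⁻¹)] at h
  have h' : (∫ ξ : ℝ, Complex.exp (-(Complex.I * ξ * x) - ((s ^ (2 * n) * ξ ^ (2 * n) : ℝ) : ℂ)))
      = ∫ v : ℝ, Complex.exp ((-2 * Real.pi * (s * v) * (x / (2 * Real.pi * s)) : ℝ) * Complex.I)
        • gg n (s * v) := by
    congr 1
    ext v
    rw [gg, Complex.ofReal_exp, smul_eq_mul, ← Complex.exp_add]
    congr 1
    have : -2 * Real.pi * (s * v) * (x / (2 * Real.pi * s)) = - (v * x) := by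
      field_simp
    rw [this, mul_pow]
    push_cast
    ring
  rw [h', h, Complex.real_smul, ← mul_assoc]
  congr 1
  rw [← Complex.ofReal_mul, mul_inv (2 * Real.pi) s]

lemma u2n_int (n : ℕ) (hn : 1 ≤ n) (s : ℝ) (hs : 0 < s) :
    Integrable (fun h => u2n n h (s ^ (2 * n))) := by
  have hp := Real.pi_pos
  simp_rw [u2n_eq n s hs]
  exact ((gg_Fint n hn).comp_div (by positivity)).const_mul _

lemma u2n_norm (n : ℕ) (s : ℝ) (hs : 0 < s) :
    ∫ h, ‖u2n n h (s ^ (2 * n))‖ = ∫ v, ‖𝓕 (gg n) v‖ := by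
  have hp := Real.pi_pos
  have hc : 0 < 2 * Real.pi * s := by positivity
  simp_rw [u2n_eq n s hs, norm_mul]
  rw [integral_const_mul, Measure.integral_comp_div (fun v => ‖𝓕 (gg n) v‖), abs_of_pos hc,
    Complex.norm_real, Real.norm_of_nonneg (by positivity), smul_eq_mul, ← mul_assoc,
    inv_mul_cancel₀ hc.ne', one_mul]

lemma u2n_inv (n : ℕ) (hn : 1 ≤ n) (s : ℝ) (hs : 0 < s) (τ : ℝ) :
    ∫ h : ℝ, Complex.exp (Complex.I * τ * h) * u2n n h (s ^ (2 * n)) =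
      ((Real.exp (-(s ^ (2 * n) * τ ^ (2 * n))) : ℝ) : ℂ) := by
  have hp := Real.pi_pos
  have hc : 0 < 2 * Real.pi * s := by positivity
  have hi := congrFun ((gg_cont n).fourierInv_fourier_eq (gg_int n hn) (gg_Fint n hn)) (s * τ)
  rw [Real.fourierInv_eq'] at hi
  have h := Measure.integral_comp_div (fun v : ℝ =>
    Complex.exp ((2 * Real.pi * inner ℝ v (s * τ) : ℝ) * Complex.I) • 𝓕 (gg n) v) (2 * Real.pi * s)
  rw [hi, abs_of_pos hc] at h
  have h' : (fun h : ℝ => Complex.exp (Complex.I * τ * h) * u2n n h (s ^ (2 * n))) =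
      fun h : ℝ => (((2 * Real.pi * s)⁻¹ : ℝ) : ℂ) *
        (Complex.exp ((2 * Real.pi * inner ℝ (h / (2 * Real.pi * s)) (s * τ) : ℝ) * Complex.I) •
          𝓕 (gg n) (h / (2 * Real.pi * s))) := by
    ext h
    rw [u2n_eq n s hs, smul_eq_mul]
    have : 2 * Real.pi * inner ℝ (h / (2 * Real.pi * s)) (s * τ) = τ * h := by
      simp only [RCLike.inner_apply, conj_trivial]
      field_simp
    rw [this]
    push_cast
    rw [show Complex.I * τ * h = τ * h * Complex.I by ring]
    ring
  rw [h', integral_const_mul, h, Complex.real_smul, ← mul_assoc, ← Complex.ofReal_mul,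
    inv_mul_cancel₀ hc.ne', gg, mul_pow]
  simp

lemma root_ex (n : ℕ) (hn : 1 ≤ n) (w : ℝ) (hw : 0 < w) : ∃ s : ℝ, 0 < s ∧ s ^ (2 * n) = w :=
  ⟨w ^ (((2 * n : ℕ) : ℝ)⁻¹), by positivity, Real.rpow_inv_natCast_pow hw.le (by lia)⟩

lemma u2n_meas (n : ℕ) : StronglyMeasurable (fun p : ℝ × ℝ => u2n n p.1 p.2) := by
  unfold u2n
  refine StronglyMeasurable.const_mul ?_ _
  refine StronglyMeasurable.integral_prod_right' (f := fun q : (ℝ × ℝ) × ℝ =>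
    Complex.exp (-(Complex.I * q.2 * q.1.1) - ((q.1.2 * q.2 ^ (2 * n) : ℝ) : ℂ))) ?_
  exact Continuous.stronglyMeasurable (by fun_prop)

lemma gamma_int (a μ : ℝ) (ha : 0 < a) (hμ : 0 < μ) :
    IntegrableOn (fun w : ℝ => w ^ (a - 1) * Real.exp (-μ * w)) (Set.Ioi 0) := by
  have := integrableOn_rpow_mul_exp_neg_mul_rpow (p := 1) (s := a - 1) (b := μ) (by linarith)
    one_pos hμ
  simpa using this

lemma F_int (n : ℕ) (hn : 1 ≤ n) (μ β : ℝ) (hμ : 0 < μ) (hβ : 0 < β) (τ : ℝ) :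
    Integrable (Function.uncurry fun h w : ℝ => Complex.exp (Complex.I * τ * h) *
      (((w ^ (2 * β - 1) * Real.exp (-μ * w) : ℝ) : ℂ) * u2n n h w))
      (volume.prod (volume.restrict (Set.Ioi (0 : ℝ)))) := by
  have hE : ∀ h : ℝ, ‖Complex.exp (Complex.I * τ * h)‖ = 1 := fun h => by
    rw [show Complex.I * τ * h = ((τ * h : ℝ) : ℂ) * Complex.I by push_cast; ring]
    exact Complex.norm_exp_ofReal_mul_I _
  have hc : Continuous (fun h : ℝ => Complex.exp (Complex.I * τ * h)) := by fun_prop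
  have hmeas : AEStronglyMeasurable (Function.uncurry fun h w : ℝ => Complex.exp (Complex.I * τ * h) *
      (((w ^ (2 * β - 1) * Real.exp (-μ * w) : ℝ) : ℂ) * u2n n h w))
      (volume.prod (volume.restrict (Set.Ioi (0 : ℝ)))) := by
    apply StronglyMeasurable.aestronglyMeasurable
    refine StronglyMeasurable.mul (f := fun p : ℝ × ℝ => Complex.exp (Complex.I * τ * p.1)) ?_
      (StronglyMeasurable.mul (f := fun p : ℝ × ℝ =>
        ((p.2 ^ (2 * β - 1) * Real.exp (-μ * p.2) : ℝ) : ℂ)) ?_ (u2n_meas n))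
    · exact Continuous.stronglyMeasurable (by fun_prop)
    · exact Measurable.stronglyMeasurable (by fun_prop)
  rw [integrable_prod_iff' hmeas]
  constructor
  · filter_upwards [ae_restrict_mem measurableSet_Ioi] with w hw
    obtain ⟨s, hs, rfl⟩ := root_ex n hn w hw
    refine (((u2n_int n hn s hs).const_mul
      (((s ^ (2 * n)) ^ (2 * β - 1) * Real.exp (-μ * s ^ (2 * n)) : ℝ) : ℂ)).bdd_mul (c := 1) hc.aestronglyMeasurable ?_)
    exact Filter.Eventually.of_forall fun h => (hE h).le
  · refine ((gamma_int (2 * β) μ (by linarith) hμ).mul_const (∫ v, ‖𝓕 (gg n) v‖)).congr ?_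
    filter_upwards [ae_restrict_mem measurableSet_Ioi] with w hw
    obtain ⟨s, hs, rfl⟩ := root_ex n hn w hw
    simp only [Function.uncurry, norm_mul, hE, one_mul]
    rw [integral_const_mul, u2n_norm n s hs, Complex.norm_real,
      Real.norm_of_nonneg (by positivity)]

/-- The spectral function of the solution to
`(μ + (−1)^n d^{2n}/dt^{2n})^β X(t) = E(t)` is `σ²/(μ + τ^{2n})^{2β}`. -/
theorem stmt4 (n : ℕ) (hn : 1 ≤ n) (μ β σ : ℝ) (hμ : 0 < μ) (hβ : 0 < β) (hσ : 0 < σ)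
    (τ : ℝ) :
    Integrable (fun h : ℝ =>
      Complex.exp (Complex.I * τ * h) *
        (((σ ^ 2 / Real.Gamma (2 * β) : ℝ) : ℂ) *
          ∫ w in Set.Ioi (0 : ℝ),
            ((w ^ (2 * β - 1) * Real.exp (-μ * w) : ℝ) : ℂ) * u2n n h w)) ∧
    ∫ h : ℝ,
        Complex.exp (Complex.I * τ * h) *
          (((σ ^ 2 / Real.Gamma (2 * β) : ℝ) : ℂ) *
            ∫ w in Set.Ioi (0 : ℝ),
              ((w ^ (2 * β - 1) * Real.exp (-μ * w) : ℝ) : ℂ) * u2n n h w) =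
      ((σ ^ 2 / (μ + τ ^ (2 * n)) ^ (2 * β) : ℝ) : ℂ) := by
  have hF := F_int n hn μ β hμ hβ τ
  have hr : 0 < μ + τ ^ (2 * n) := by
    have : 0 ≤ τ ^ (2 * n) := (even_two_mul n).pow_nonneg τ
    linarith
  have hG : 0 < Real.Gamma (2 * β) := Real.Gamma_pos_of_pos (by linarith)
  have heq : (fun h : ℝ =>
      Complex.exp (Complex.I * τ * h) *
        (((σ ^ 2 / Real.Gamma (2 * β) : ℝ) : ℂ) *
          ∫ w in Set.Ioi (0 : ℝ),
            ((w ^ (2 * β - 1) * Real.exp (-μ * w) : ℝ) : ℂ) * u2n n h w)) =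
      fun h : ℝ => ((σ ^ 2 / Real.Gamma (2 * β) : ℝ) : ℂ) * ∫ w in Set.Ioi (0 : ℝ),
        Complex.exp (Complex.I * τ * h) *
          (((w ^ (2 * β - 1) * Real.exp (-μ * w) : ℝ) : ℂ) * u2n n h w) := by
    ext h
    rw [integral_const_mul]
    ring
  rw [heq]
  refine ⟨hF.integral_prod_left.const_mul _, ?_⟩
  rw [integral_const_mul, integral_integral_swap hF]
  have h1 : ∫ w in Set.Ioi (0 : ℝ), ∫ h : ℝ, Complex.exp (Complex.I * τ * h) *
          (((w ^ (2 * β - 1) * Real.exp (-μ * w) : ℝ) : ℂ) * u2n n h w) =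
      ∫ w in Set.Ioi (0 : ℝ),
        ((w ^ (2 * β - 1) * Real.exp (-((μ + τ ^ (2 * n)) * w)) : ℝ) : ℂ) := by
    refine setIntegral_congr_fun measurableSet_Ioi fun w hw => ?_
    obtain ⟨s, hs, rfl⟩ := root_ex n hn w hw
    simp only [mul_left_comm (Complex.exp _)]
    rw [integral_const_mul, u2n_inv n hn s hs, ← Complex.ofReal_mul, mul_assoc, ← Real.exp_add]
    congr 3
    ring_nf
  rw [h1, integral_complex_ofReal, Real.integral_rpow_mul_exp_neg_mul_Ioi (by linarith) hr]
  norm_cast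
  rw [one_div, Real.inv_rpow hr.le]
  field_simp
end

section
/- Let μ > 0, β > 0, σ > 0. For every τ ∈ ℝ, the function h ↦ e^{iτh} (σ²/Γ(2β)) ∫₀^∞ w^{2β−1} e^{−μw} G(h,w) dw is integrable on ℝ and ∫_ℝ e^{iτh} [(σ²/Γ(2β)) ∫₀^∞ w^{2β−1} e^{−μw} G(h,w) dw] dh = σ²/(μ + τ²)^{2β}. (This is the spectral function of the solution to (μ − d²/dt²)^β X(t) = E(t), where E is Gaussian white noise of intensity σ².) -/
open MeasureTheory Set Real

/-- The Gaussian heat kernel `G(x,w) = exp(−x²/(4w))/(2√(πw))`. -/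
noncomputable def G (x w : ℝ) : ℝ :=
  Real.exp (-x ^ 2 / (4 * w)) / (2 * Real.sqrt (Real.pi * w))

theorem G_integrable (w : ℝ) (hw : 0 < w) : Integrable (fun h : ℝ => G h w) := by
  unfold G
  have := (integrable_exp_neg_mul_sq (b := 1 / (4 * w)) (by positivity)).div_const
    (2 * Real.sqrt (Real.pi * w))
  refine this.congr (Filter.Eventually.of_forall fun h => ?_)
  simp only
  congr 2
  field_simp

theorem G_fourier (w τ : ℝ) (hw : 0 < w) :
    ∫ h : ℝ, Complex.exp (Complex.I * τ * h) * ((G h w : ℝ) : ℂ)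
      = ((Real.exp (-τ ^ 2 * w) : ℝ) : ℂ) := by
  have h1 := fourierIntegral_gaussian (b := ((1 / (4 * w) : ℝ) : ℂ))
    (by rw [Complex.ofReal_re]; positivity) (τ : ℂ)
  have h2 : ∀ h : ℝ, Complex.exp (Complex.I * τ * h) * ((G h w : ℝ) : ℂ)
      = (Complex.exp (Complex.I * τ * h) *
        Complex.exp (-((1 / (4 * w) : ℝ) : ℂ) * (h : ℂ) ^ 2)) *
          (((2 * Real.sqrt (Real.pi * w))⁻¹ : ℝ) : ℂ) := by
    intro h
    have : G h w = Real.exp (-(1 / (4 * w)) * h ^ 2) * (2 * Real.sqrt (Real.pi * w))⁻¹ := by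
      unfold G
      rw [div_eq_mul_inv]
      congr 2
      field_simp
    rw [this]
    push_cast
    ring
  simp_rw [h2]
  rw [integral_mul_const, h1]
  have h3 : ((Real.pi : ℂ) / ((1 / (4 * w) : ℝ) : ℂ)) ^ (1 / 2 : ℂ)
      = ((2 * Real.sqrt (Real.pi * w) : ℝ) : ℂ) := by
    have : (Real.pi : ℂ) / ((1 / (4 * w) : ℝ) : ℂ) = ((2 ^ 2 * (Real.pi * w) : ℝ) : ℂ) := by
      push_cast
      field_simp
      ring
    rw [this, show (1 / 2 : ℂ) = ((1 / 2 : ℝ) : ℂ) by push_cast; rfl,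
      ← Complex.ofReal_cpow (by positivity), ← Real.sqrt_eq_rpow,
      Real.sqrt_mul (by positivity), Real.sqrt_sq (by norm_num)]
  have h4 : Complex.exp (-(τ : ℂ) ^ 2 / (4 * ((1 / (4 * w) : ℝ) : ℂ)))
      = ((Real.exp (-τ ^ 2 * w) : ℝ) : ℂ) := by
    have : (w : ℂ) ≠ 0 := by exact_mod_cast hw.ne'
    rw [Complex.ofReal_exp]
    congr 1
    push_cast
    field_simp
  rw [h3, h4]
  have : (2 * Real.sqrt (Real.pi * w)) ≠ 0 := by positivity
  rw [mul_right_comm, ← Complex.ofReal_mul, mul_inv_cancel₀ this]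
  simp

theorem G_nonneg (h w : ℝ) : 0 ≤ G h w := by unfold G; positivity

theorem G_integral (w : ℝ) (hw : 0 < w) : ∫ h : ℝ, G h w = 1 := by
  have := G_fourier w 0 hw
  simp only [Complex.ofReal_zero, mul_zero, zero_mul, Complex.exp_zero, one_mul] at this
  rw [integral_complex_ofReal] at this
  have h2 := Complex.ofReal_injective this
  simpa using h2

theorem F_integrable (μ β : ℝ) (hμ : 0 < μ) (hβ : 0 < β) :
    Integrable (fun p : ℝ × ℝ => p.2 ^ (2 * β - 1) * Real.exp (-μ * p.2) * G p.1 p.2)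
      ((volume : Measure ℝ).prod (volume.restrict (Set.Ioi (0 : ℝ)))) := by
  have hm : Measurable
      (fun p : ℝ × ℝ => p.2 ^ (2 * β - 1) * Real.exp (-μ * p.2) * G p.1 p.2) := by
    unfold G
    fun_prop
  rw [integrable_prod_iff' hm.aestronglyMeasurable]
  constructor
  · filter_upwards [ae_restrict_mem measurableSet_Ioi] with w hw
    exact (G_integrable w hw).const_mul _
  · have hg := integrableOn_rpow_mul_exp_neg_mul_rpow (p := 1) (s := 2 * β - 1) (b := μ)
      (by linarith) one_pos hμ
    refine Integrable.congr hg ?_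
    filter_upwards [ae_restrict_mem measurableSet_Ioi] with w hw
    have hw : 0 < w := hw
    have : ∀ h : ℝ, ‖w ^ (2 * β - 1) * Real.exp (-μ * w) * G h w‖
        = w ^ (2 * β - 1) * Real.exp (-μ * w) * G h w := fun h => by
      rw [Real.norm_of_nonneg]
      have := G_nonneg h w
      positivity
    simp_rw [this]
    rw [integral_const_mul, G_integral w hw, Real.rpow_one, mul_one]

/-- The spectral function of the solution to `(μ − d²/dt²)^β X(t) = E(t)` is
`σ²/(μ + τ²)^{2β}`. -/
theorem stmt6 (μ β σ : ℝ) (hμ : 0 < μ) (hβ : 0 < β) (hσ : 0 < σ) (τ : ℝ) :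
    Integrable (fun h : ℝ =>
      Complex.exp (Complex.I * τ * h) *
        (((σ ^ 2 / Real.Gamma (2 * β) : ℝ) : ℂ) *
          ((∫ w in Set.Ioi (0 : ℝ), w ^ (2 * β - 1) * Real.exp (-μ * w) * G h w : ℝ) : ℂ))) ∧
    ∫ h : ℝ,
        Complex.exp (Complex.I * τ * h) *
          (((σ ^ 2 / Real.Gamma (2 * β) : ℝ) : ℂ) *
            ((∫ w in Set.Ioi (0 : ℝ), w ^ (2 * β - 1) * Real.exp (-μ * w) * G h w : ℝ) : ℂ)) =
      ((σ ^ 2 / (μ + τ ^ 2) ^ (2 * β) : ℝ) : ℂ) := by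
  have hF := F_integrable μ β hμ hβ
  have hI := hF.integral_prod_left
  have hb : ∀ h : ℝ, ‖Complex.exp (Complex.I * τ * h)‖ = 1 := fun h => by
    rw [show Complex.I * τ * h = ((τ * h : ℝ) : ℂ) * Complex.I by push_cast; ring]
    exact Complex.norm_exp_ofReal_mul_I _
  constructor
  · refine Integrable.bdd_mul (c := 1) (hI.ofReal.const_mul _) ?_ ?_
    · exact (by fun_prop : Continuous fun h : ℝ =>
        Complex.exp (Complex.I * τ * h)).aestronglyMeasurable
    · exact Filter.Eventually.of_forall fun h => (hb h).le
  · have hFc : Integrable (Function.uncurry fun h w : ℝ => Complex.exp (Complex.I * τ * h) *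
        ((w ^ (2 * β - 1) * Real.exp (-μ * w) * G h w : ℝ) : ℂ))
        ((volume : Measure ℝ).prod (volume.restrict (Set.Ioi (0 : ℝ)))) := by
      refine Integrable.bdd_mul (c := 1) hF.ofReal ?_ ?_
      · exact (by fun_prop : Continuous fun p : ℝ × ℝ =>
          Complex.exp (Complex.I * τ * p.1)).aestronglyMeasurable
      · exact Filter.Eventually.of_forall fun p => (hb p.1).le
    have hsw := integral_integral_swap hFc
    have e1 : ∀ h : ℝ, Complex.exp (Complex.I * τ * h) *
          (((σ ^ 2 / Real.Gamma (2 * β) : ℝ) : ℂ) *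
            ((∫ w in Set.Ioi (0 : ℝ), w ^ (2 * β - 1) * Real.exp (-μ * w) * G h w : ℝ) : ℂ))
        = ((σ ^ 2 / Real.Gamma (2 * β) : ℝ) : ℂ) *
          ∫ w in Set.Ioi (0 : ℝ), Complex.exp (Complex.I * τ * h) *
            ((w ^ (2 * β - 1) * Real.exp (-μ * w) * G h w : ℝ) : ℂ) := fun h => by
      rw [integral_const_mul, integral_complex_ofReal]
      ring
    simp_rw [e1]
    rw [integral_const_mul, hsw]
    have e2 : ∫ w in Set.Ioi (0 : ℝ), ∫ h : ℝ, Complex.exp (Complex.I * τ * h) *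
            ((w ^ (2 * β - 1) * Real.exp (-μ * w) * G h w : ℝ) : ℂ)
        = ∫ w in Set.Ioi (0 : ℝ),
          ((w ^ (2 * β - 1) * Real.exp (-((μ + τ ^ 2) * w)) : ℝ) : ℂ) := by
      refine setIntegral_congr_fun measurableSet_Ioi fun w hw => ?_
      have hw : 0 < w := hw
      have : ∀ h : ℝ, Complex.exp (Complex.I * τ * h) *
            ((w ^ (2 * β - 1) * Real.exp (-μ * w) * G h w : ℝ) : ℂ)
          = ((w ^ (2 * β - 1) * Real.exp (-μ * w) : ℝ) : ℂ) *
            (Complex.exp (Complex.I * τ * h) * ((G h w : ℝ) : ℂ)) := fun h => by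
        rw [Complex.ofReal_mul _ (G h w)]
        ring
      simp only [this]
      rw [integral_const_mul, G_fourier w τ hw, ← Complex.ofReal_mul, mul_assoc, ← Real.exp_add]
      congr 4
      ring
    rw [e2, integral_complex_ofReal,
      Real.integral_rpow_mul_exp_neg_mul_Ioi (by positivity) (by positivity),
      ← Complex.ofReal_mul]
    congr 1
    have hG : Real.Gamma (2 * β) ≠ 0 := (Real.Gamma_pos_of_pos (by positivity)).ne'
    rw [Real.div_rpow zero_le_one (by positivity), Real.one_rpow]
    field_simp
end

section
/- For every μ > 0 and β > 0, lim_{h → ∞} [∫₀^∞ z^{β−3/2} e^{−μ²z − h²/(4z)} dz] / [√π · 2^{1−β} · μ^{−β} · h^{β−1} e^{−μh}] = 1. -/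
open MeasureTheory Set Real Filter

lemma aux_cosh (u : ℝ) : u ^ 2 / 2 ≤ Real.cosh u - 1 := by
  have h1 : Real.cosh u = 1 + 2 * Real.sinh (u / 2) ^ 2 := by
    have := Real.cosh_two_mul (u / 2)
    rw [Real.cosh_sq] at this
    rw [show u = 2 * (u / 2) by ring, this]; ring_nf
  have h2 : (u / 2) ^ 2 ≤ Real.sinh (u / 2) ^ 2 := by
    rw [sq_le_sq, Real.abs_sinh]
    exact Real.self_le_sinh_iff.2 (abs_nonneg _)
  nlinarith

lemma aux_lim (s : ℝ) :
    Tendsto (fun b : ℝ => (Real.cosh (b * s) - 1) / b ^ 2) (nhdsWithin 0 (Ioi 0))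
      (nhds (s ^ 2 / 2)) := by
  have hd : HasDerivAt (fun b : ℝ => Real.sinh (b * s / 2)) (s / 2) 0 := by
    have := (((hasDerivAt_id (0:ℝ)).mul_const s).div_const 2).sinh
    simpa using this
  have h1 := hd.tendsto_slope_zero_right
  have h2 := (h1.pow 2).const_mul 2
  have e : 2 * (s / 2) ^ 2 = s ^ 2 / 2 := by ring
  rw [e] at h2
  refine h2.congr' ?_
  filter_upwards [self_mem_nhdsWithin] with b hb
  have hb : b ≠ 0 := ne_of_gt hb
  have h1 : Real.cosh (b * s) = 1 + 2 * Real.sinh (b * s / 2) ^ 2 := by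
    have := Real.cosh_two_mul (b * s / 2)
    rw [Real.cosh_sq] at this
    rw [show b * s = 2 * (b * s / 2) by ring, this]; ring_nf
  rw [h1]
  simp
  field_simp

lemma aux_F (ν : ℝ) :
    Tendsto (fun b : ℝ => ∫ s : ℝ, Real.exp (ν * (b * s) - (Real.cosh (b * s) - 1) / b ^ 2))
      (nhdsWithin 0 (Ioi 0)) (nhds (Real.sqrt (2 * Real.pi))) := by
  have hI : ∫ s : ℝ, Real.exp (-(s ^ 2 / 2)) = Real.sqrt (2 * Real.pi) := by
    have := integral_gaussian (1 / 2)
    rw [show Real.pi / (1 / 2) = 2 * Real.pi by ring] at this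
    rw [← this]
    congr 1; ext s; ring_nf
  rw [← hI]
  refine tendsto_integral_filter_of_dominated_convergence
    (fun s => Real.exp (ν ^ 2) * Real.exp (-(1 / 4) * s ^ 2)) ?_ ?_ ?_ ?_
  · refine Eventually.of_forall fun b => Continuous.aestronglyMeasurable ?_
    fun_prop
  · filter_upwards [Ioo_mem_nhdsGT (show (0:ℝ) < 1 by norm_num)] with b hb
    refine Eventually.of_forall fun s => ?_
    rw [Real.norm_eq_abs, abs_of_pos (Real.exp_pos _), ← Real.exp_add]
    apply Real.exp_le_exp.2
    have h1 : s ^ 2 / 2 ≤ (Real.cosh (b * s) - 1) / b ^ 2 := by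
      rw [le_div_iff₀ (pow_pos hb.1 2)]
      have := aux_cosh (b * s)
      nlinarith
    have h2 : ν ^ 2 * b ^ 2 ≤ ν ^ 2 * 1 := by
      apply mul_le_mul_of_nonneg_left _ (sq_nonneg _)
      nlinarith [hb.1, hb.2]
    nlinarith [sq_nonneg (ν * b - s / 2)]
  · exact (integrable_exp_neg_mul_sq (by norm_num)).const_mul _
  · refine Eventually.of_forall fun s => ?_
    have h1 : Tendsto (fun b : ℝ => ν * (b * s)) (nhdsWithin 0 (Ioi 0)) (nhds 0) := by
      have : Tendsto (fun b : ℝ => ν * (b * s)) (nhds 0) (nhds (ν * (0 * s))) :=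
        (by fun_prop : Continuous fun b : ℝ => ν * (b * s)).tendsto 0
      simp only [zero_mul, mul_zero] at this
      exact this.mono_left nhdsWithin_le_nhds
    have h2 := h1.sub (aux_lim s)
    rw [zero_sub] at h2
    exact (Real.continuous_exp.tendsto _).comp h2

lemma aux_cov (a b : ℝ) (ha : 0 < a) (hb : 0 < b) (g : ℝ → ℝ) :
    ∫ z in Ioi (0:ℝ), g z = ∫ s : ℝ, (a * b * Real.exp (b * s)) * g (a * Real.exp (b * s)) := by
  have him : (fun s : ℝ => a * Real.exp (b * s)) '' univ = Ioi 0 := by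
    ext z
    simp only [image_univ, mem_range, mem_Ioi]
    constructor
    · rintro ⟨s, rfl⟩; positivity
    · intro hz
      refine ⟨Real.log (z / a) / b, ?_⟩
      rw [mul_div_cancel₀ _ hb.ne', Real.exp_log (by positivity)]
      field_simp
  have hder : ∀ s ∈ (univ : Set ℝ), HasDerivWithinAt (fun s : ℝ => a * Real.exp (b * s))
      (a * b * Real.exp (b * s)) univ s := by
    intro s _
    have h0 : HasDerivAt (fun s : ℝ => b * s) b s := by
      simpa using (hasDerivAt_id s).const_mul b
    have h1 : HasDerivAt (fun s : ℝ => a * Real.exp (b * s)) (a * (Real.exp (b * s) * b)) s :=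
      h0.exp.const_mul a
    rw [show a * b * Real.exp (b * s) = a * (Real.exp (b * s) * b) by ring]
    exact h1.hasDerivWithinAt
  have hinj : InjOn (fun s : ℝ => a * Real.exp (b * s)) univ := by
    intro s _ t _ h
    have := Real.exp_injective (mul_left_cancel₀ ha.ne' h)
    exact mul_left_cancel₀ hb.ne' this
  rw [← him, integral_image_eq_integral_abs_deriv_smul MeasurableSet.univ hder hinj,
    Measure.restrict_univ]
  congr 1; ext s
  rw [abs_of_pos (by positivity), smul_eq_mul]

/-- Large-lag covariance asymptotics: for `μ > 0`, `β > 0`,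
`∫₀^∞ z^{β−3/2} e^{−μ²z − h²/(4z)} dz ∼ √π 2^{1−β} μ^{−β} h^{β−1} e^{−μh}` as `h → ∞`. -/
theorem stmt9 (μ β : ℝ) (hμ : 0 < μ) (hβ : 0 < β) :
    Filter.Tendsto
      (fun h : ℝ =>
        (∫ z in Set.Ioi (0 : ℝ),
            z ^ (β - 3 / 2) * Real.exp (-μ ^ 2 * z - h ^ 2 / (4 * z))) /
          (Real.sqrt Real.pi * 2 ^ (1 - β) * μ ^ (-β) * h ^ (β - 1) * Real.exp (-μ * h)))
      Filter.atTop (nhds 1) := by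
  have hb : Tendsto (fun h : ℝ => (Real.sqrt (μ * h))⁻¹) atTop (nhdsWithin 0 (Ioi 0)) :=
    tendsto_inv_atTop_nhdsGT_zero.comp
      (Real.tendsto_sqrt_atTop.comp (tendsto_id.const_mul_atTop hμ))
  have hF := ((aux_F (β - 1 / 2)).comp hb).div_const (Real.sqrt (2 * Real.pi))
  rw [div_self (by positivity)] at hF
  refine hF.congr' ?_
  filter_upwards [eventually_gt_atTop 0] with h hh
  simp only [Function.comp]
  set b := (Real.sqrt (μ * h))⁻¹ with hbdef
  have hb0 : 0 < b := by positivity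
  have hb2 : b ^ 2 = (μ * h)⁻¹ := by
    rw [hbdef, inv_pow, Real.sq_sqrt (by positivity)]
  have ha0 : 0 < h / (2 * μ) := by positivity
  rw [aux_cov (h / (2 * μ)) b ha0 hb0]
  have key : ∀ s : ℝ, (h / (2 * μ) * b * Real.exp (b * s)) *
      ((h / (2 * μ) * Real.exp (b * s)) ^ (β - 3 / 2) *
        Real.exp (-μ ^ 2 * (h / (2 * μ) * Real.exp (b * s)) -
          h ^ 2 / (4 * (h / (2 * μ) * Real.exp (b * s))))) =
      ((h / (2 * μ)) ^ (β - 1 / 2) * b * Real.exp (-μ * h)) *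
        Real.exp ((β - 1 / 2) * (b * s) - (Real.cosh (b * s) - 1) / b ^ 2) := by
    intro s
    have e1 : -μ ^ 2 * (h / (2 * μ) * Real.exp (b * s)) -
          h ^ 2 / (4 * (h / (2 * μ) * Real.exp (b * s))) = -(μ * h) * Real.cosh (b * s) := by
      rw [Real.cosh_eq, Real.exp_neg]
      have := Real.exp_pos (b * s)
      field_simp
      ring
    rw [e1, Real.mul_rpow ha0.le (Real.exp_pos _).le, ← Real.exp_mul, hb2,
      show β - 1 / 2 = (β - 3 / 2) + 1 by ring, Real.rpow_add_one ha0.ne']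
    have e2 : Real.exp (-μ * h) * Real.exp ((β - 3 / 2 + 1) * (b * s) -
        (Real.cosh (b * s) - 1) / (μ * h)⁻¹) = Real.exp (b * s) *
        (Real.exp (b * s * (β - 3 / 2)) * Real.exp (-(μ * h) * Real.cosh (b * s))) := by
      rw [← Real.exp_add, ← Real.exp_add, ← Real.exp_add, div_inv_eq_mul]
      congr 1; ring
    linear_combination (-(h / (2 * μ)) ^ (β - 3 / 2) * (h / (2 * μ)) * b) * e2
  simp_rw [key]
  rw [integral_const_mul]
  have hc : Real.sqrt Real.pi * 2 ^ (1 - β) * μ ^ (-β) * h ^ (β - 1) =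
      (h / (2 * μ)) ^ (β - 1 / 2) * b * Real.sqrt (2 * Real.pi) := by
    rw [hbdef, Real.sqrt_mul hμ.le, Real.sqrt_mul (by norm_num : (0:ℝ) ≤ 2),
      Real.div_rpow hh.le (by positivity), Real.mul_rpow (by norm_num) hμ.le]
    have f1 : (2:ℝ) ^ (1 - β) * 2 ^ (β - 1 / 2) = Real.sqrt 2 := by
      rw [← Real.rpow_add (by norm_num), Real.sqrt_eq_rpow]; congr 1; ring
    have f2 : μ ^ (-β) * μ ^ (β - 1 / 2) * Real.sqrt μ = 1 := by
      rw [Real.sqrt_eq_rpow, ← Real.rpow_add hμ, ← Real.rpow_add hμ]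
      ring_nf; simp
    have f3 : h ^ (β - 1) * Real.sqrt h = h ^ (β - 1 / 2) := by
      rw [Real.sqrt_eq_rpow, ← Real.rpow_add hh]; congr 1; ring
    have := Real.sqrt_pos.2 hμ
    have := Real.sqrt_pos.2 hh
    have g1 : 0 < (2:ℝ) ^ (β - 1 / 2) := by positivity
    have g2 : 0 < μ ^ (β - 1 / 2) := by positivity
    rw [← f3, ← f1, div_mul_eq_mul_div, div_mul_eq_mul_div, eq_div_iff (by positivity), mul_inv]
    generalize (2:ℝ) ^ (β - 1 / 2) = A at *
    generalize μ ^ (β - 1 / 2) = B at *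
    generalize μ ^ (-β) = C at *
    generalize (2:ℝ) ^ (1 - β) = D at *
    generalize h ^ (β - 1) = E at *
    field_simp
    linear_combination (D * E) * f2
  rw [hc]
  have : 0 < (h / (2 * μ)) ^ (β - 1 / 2) := by positivity
  have : 0 < Real.sqrt (2 * Real.pi) := by positivity
  have : 0 < Real.exp (-μ * h) := Real.exp_pos _
  field_simp
end

section
/- Let α ∈ (0,1), λ > 0, and let f : ℝ → ℝ be measurable such that t ↦ e^{λt} f(t) is integrable on ℝ and (t,w) ↦ e^{λt} |f(t) − f(t+w)| w^{−1−α} is integrable on ℝ × (0,∞). Then ∫_ℝ e^{λt} [(α/Γ(1−α)) ∫₀^∞ (f(t) − f(t+w)) w^{−α−1} dw] dt = λ^α ∫_ℝ e^{λt} f(t) dt. -/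
open MeasureTheory Set Real Filter Topology

theorem aux_bound1 (l w : ℝ) : 1 - Real.exp (-(l * w)) ≤ l * w := by
  have := Real.one_sub_le_exp_neg (l * w); linarith

theorem aux_int (α : ℝ) (hα : α ∈ Set.Ioo (0 : ℝ) 1) (l : ℝ) (hl : 0 < l) :
    IntegrableOn (fun w : ℝ => (1 - Real.exp (-(l * w))) * w ^ (-α - 1)) (Ioi 0) := by
  obtain ⟨h0, h1⟩ := hα
  have hm : Measurable (fun w : ℝ => (1 - Real.exp (-(l * w))) * w ^ (-α - 1)) := by fun_prop
  have hnn : ∀ w : ℝ, 0 < w → 0 ≤ 1 - Real.exp (-(l * w)) := by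
    intro w hw
    have : Real.exp (-(l * w)) ≤ 1 := Real.exp_le_one_iff.2 (by have := mul_pos hl hw; linarith)
    linarith
  rw [← Ioc_union_Ioi_eq_Ioi (zero_le_one (α := ℝ))]
  refine IntegrableOn.union ?_ ?_
  · have h : IntegrableOn (fun w : ℝ => l * w ^ (-α)) (Ioc 0 1) := by
      have := (intervalIntegral.intervalIntegrable_rpow' (a := 0) (b := 1) (r := -α) (by linarith))
      rw [intervalIntegrable_iff_integrableOn_Ioc_of_le zero_le_one] at this
      exact this.const_mul l
    refine Integrable.mono' h hm.aestronglyMeasurable ?_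
    filter_upwards [ae_restrict_mem measurableSet_Ioc] with w hw
    have hw0 : 0 < w := hw.1
    rw [Real.norm_of_nonneg (mul_nonneg (hnn w hw0) (by positivity))]
    calc _ ≤ (l * w) * w ^ (-α - 1) := by
          gcongr; exact aux_bound1 l w
      _ = l * w ^ (-α) := by
          rw [Real.rpow_sub_one hw0.ne']; field_simp
  · have h : IntegrableOn (fun w : ℝ => w ^ (-α - 1)) (Ioi 1) :=
      integrableOn_Ioi_rpow_of_lt (by linarith) one_pos
    refine Integrable.mono' h hm.aestronglyMeasurable ?_
    filter_upwards [ae_restrict_mem measurableSet_Ioi] with w hw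
    have hw0 : 0 < w := lt_trans one_pos hw
    rw [Real.norm_of_nonneg (mul_nonneg (hnn w hw0) (by positivity))]
    have := Real.exp_pos (-(l * w))
    exact mul_le_of_le_one_left (by positivity) (by linarith)

theorem aux_val (α : ℝ) (hα : α ∈ Set.Ioo (0 : ℝ) 1) (l : ℝ) (hl : 0 < l) :
    ∫ w in Ioi (0 : ℝ), (1 - Real.exp (-(l * w))) * w ^ (-α - 1) =
      Real.Gamma (1 - α) / α * l ^ α := by
  have hI := aux_int α hα l hl
  obtain ⟨h0, h1⟩ := hα
  have hnn : ∀ w : ℝ, 0 < w → 0 ≤ 1 - Real.exp (-(l * w)) := by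
    intro w hw
    have : Real.exp (-(l * w)) ≤ 1 := Real.exp_le_one_iff.2 (by have := mul_pos hl hw; linarith)
    linarith
  have hG := Real.integral_rpow_mul_exp_neg_mul_Ioi (a := 1 - α) (by linarith) hl
  have hGI := integrableOn_rpow_mul_exp_neg_mul_rpow (p := 1) (s := -α) (b := l)
    (by linarith) one_pos hl
  have hlim : ∀ F : Filter ℝ, (∀ᶠ x in F, (0:ℝ) < x) →
      Tendsto (fun w : ℝ => (1 - Real.exp (-(l * w))) * w ^ (-α)) F (𝓝 0) →
      Tendsto ((fun w : ℝ => 1 - Real.exp (-(l * w))) * (fun w : ℝ => -(w ^ (-α) / α))) F (𝓝 0) := by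
    intro F _ h
    have := h.mul_const (-(1 / α))
    rw [zero_mul] at this
    refine this.congr fun x => ?_
    simp only [Pi.mul_apply]; ring
  have key := integral_Ioi_mul_deriv_eq_deriv_mul (a := (0:ℝ)) (a' := (0:ℝ)) (b' := (0:ℝ))
    (u := fun w : ℝ => 1 - Real.exp (-(l * w))) (u' := fun w => l * Real.exp (-(l * w)))
    (v := fun w : ℝ => -(w ^ (-α) / α)) (v' := fun w => w ^ (-α - 1)) ?_ ?_ hI ?_ ?_ ?_
  · rw [key]
    have : ∀ x : ℝ, l * Real.exp (-(l * x)) * -(x ^ (-α) / α) =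
        (-(l / α)) * (x ^ (1 - α - 1) * Real.exp (-(l * x))) := by
      intro x
      rw [show 1 - α - 1 = -α by ring]; ring
    simp_rw [this]
    rw [integral_const_mul, hG, one_div, Real.inv_rpow hl.le, Real.rpow_sub hl, Real.rpow_one]
    have := Real.rpow_pos_of_pos hl α
    field_simp
    ring
  · intro x _
    have := (((hasDerivAt_id x).const_mul l).neg.exp).const_sub 1
    refine HasDerivAt.congr_deriv (f' := _) this ?_
    simp [mul_comm]
  · intro x hx
    have := ((Real.hasDerivAt_rpow_const (p := -α) (Or.inl (ne_of_gt hx))).div_const α).neg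
    refine HasDerivAt.congr_deriv (f' := _) this ?_
    field_simp
  · have := hGI.const_mul (-(l / α))
    refine this.congr (ae_of_all _ fun x => ?_)
    simp only [Pi.mul_apply, Real.rpow_one, neg_mul]; ring
  · refine hlim _ self_mem_nhdsWithin ?_
    have hz : Tendsto (fun w : ℝ => l * w ^ (1 - α)) (𝓝[>] 0) (𝓝 0) := by
      have : Continuous (fun w : ℝ => l * w ^ (1 - α)) :=
        continuous_const.mul (Real.continuous_rpow_const (by linarith))
      have h := this.tendsto 0
      rw [Real.zero_rpow (by linarith), mul_zero] at h
      exact h.mono_left nhdsWithin_le_nhds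
    refine squeeze_zero' ?_ ?_ hz
    · filter_upwards [self_mem_nhdsWithin] with w hw
      exact mul_nonneg (hnn w hw) (Real.rpow_nonneg (le_of_lt hw) _)
    · filter_upwards [self_mem_nhdsWithin] with w hw
      have hw0 : 0 < w := hw
      calc _ ≤ (l * w) * w ^ (-α) := by
            gcongr; exact aux_bound1 l w
        _ = l * w ^ (1 - α) := by
            rw [sub_eq_add_neg, Real.rpow_add hw0, Real.rpow_one]; ring
  · refine hlim _ (eventually_gt_atTop 0) ?_
    refine squeeze_zero' ?_ ?_ (tendsto_rpow_neg_atTop h0)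
    · filter_upwards [eventually_gt_atTop 0] with w hw
      exact mul_nonneg (hnn w hw) (Real.rpow_nonneg (le_of_lt hw) _)
    · filter_upwards [eventually_gt_atTop 0] with w hw
      have := Real.exp_pos (-(l * w))
      exact mul_le_of_le_one_left (by positivity) (by linarith)

/-- The (two-sided) Laplace transform of the Marchaud (upper-Weyl) fractional derivative
`d^α f/d(−t)^α = (α/Γ(1−α)) ∫₀^∞ (f(t) − f(t+w)) w^{−α−1} dw` at `λ` equals
`λ^α` times the Laplace transform of `f`. -/
theorem stmt11 (α : ℝ) (hα : α ∈ Set.Ioo (0 : ℝ) 1) (l : ℝ) (hl : 0 < l) (f : ℝ → ℝ)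
    (hf : Measurable f)
    (h1 : Integrable (fun t : ℝ => Real.exp (l * t) * f t))
    (h2 : IntegrableOn
      (fun p : ℝ × ℝ => Real.exp (l * p.1) * |f p.1 - f (p.1 + p.2)| * p.2 ^ (-1 - α))
      (Set.univ ×ˢ Set.Ioi 0)) :
    ∫ t : ℝ,
        Real.exp (l * t) *
          ((α / Real.Gamma (1 - α)) *
            ∫ w in Set.Ioi (0 : ℝ), (f t - f (t + w)) * w ^ (-α - 1)) =
      l ^ α * ∫ t : ℝ, Real.exp (l * t) * f t := by
  have hI : Integrable (Function.uncurry fun t w : ℝ =>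
      Real.exp (l * t) * ((f t - f (t + w)) * w ^ (-α - 1)))
      ((volume : Measure ℝ).prod ((volume : Measure ℝ).restrict (Ioi 0))) := by
    have e : (volume : Measure ℝ).prod ((volume : Measure ℝ).restrict (Ioi 0)) =
        (volume : Measure (ℝ × ℝ)).restrict (univ ×ˢ Ioi 0) := by
      rw [Measure.volume_eq_prod, ← Measure.prod_restrict, Measure.restrict_univ]
    rw [e]
    have hm : Measurable (Function.uncurry fun t w : ℝ =>
      Real.exp (l * t) * ((f t - f (t + w)) * w ^ (-α - 1))) := by
      unfold Function.uncurry
      fun_prop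
    refine Integrable.mono' h2 hm.aestronglyMeasurable ?_
    filter_upwards [ae_restrict_mem (MeasurableSet.univ.prod measurableSet_Ioi)] with p hp
    have hp0 : 0 < p.2 := hp.2
    simp only [Function.uncurry, Real.norm_eq_abs, abs_mul, Real.abs_exp]
    rw [abs_of_nonneg (Real.rpow_nonneg hp0.le _), show -α - 1 = -1 - α by ring, mul_assoc]
  have hw : ∀ w : ℝ, ∫ t : ℝ, Real.exp (l * t) * ((f t - f (t + w)) * w ^ (-α - 1)) =
      ((1 - Real.exp (-(l * w))) * w ^ (-α - 1)) * ∫ t : ℝ, Real.exp (l * t) * f t := by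
    intro w
    have hs := h1.comp_add_right w
    have e : ∀ t : ℝ, Real.exp (l * t) * ((f t - f (t + w)) * w ^ (-α - 1)) =
        w ^ (-α - 1) * (Real.exp (l * t) * f t -
          Real.exp (-(l * w)) * (Real.exp (l * (t + w)) * f (t + w))) := by
      intro t
      have : Real.exp (l * t) = Real.exp (-(l * w)) * Real.exp (l * (t + w)) := by
        rw [← Real.exp_add]; congr 1; ring
      rw [← mul_assoc (Real.exp (-(l * w))), ← this]; ring
    simp_rw [e]
    rw [integral_const_mul, integral_sub h1 (hs.const_mul _), integral_const_mul,
      integral_add_right_eq_self (fun t => Real.exp (l * t) * f t) w]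
    ring
  have hsw := integral_integral_swap hI
  simp_rw [hw] at hsw
  rw [integral_mul_const, aux_val α hα l hl] at hsw
  simp_rw [integral_const_mul] at hsw
  simp_rw [mul_left_comm _ (α / Real.Gamma (1 - α))]
  rw [integral_const_mul, hsw]
  have hg : 0 < Real.Gamma (1 - α) := Real.Gamma_pos_of_pos (by linarith [hα.2])
  have ha : 0 < α := hα.1
  field_simp
end

section
/- For every α ∈ (0,1), s > 0 and θ ∈ ℝ, the function z ↦ e^{iθz} h_α(z,s) is integrable on ℝ and ∫_ℝ e^{iθz} h_α(z,s) dz = exp(−s|θ|^α e^{−iπα·sgn(θ)/2}). -/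
open MeasureTheory Set Real

/-- The stable subordinator density
`h_α(z,s) = (1/(2π)) ∫_ℝ exp(−iτz − s|τ|^α e^{−iπα·sgn(τ)/2}) dτ`. -/
noncomputable def hstable (α s z : ℝ) : ℂ :=
  ((2 * Real.pi)⁻¹ : ℝ) *
    ∫ τ : ℝ, Complex.exp (-(Complex.I * τ * z) -
      ((s * |τ| ^ α : ℝ) : ℂ) *
        Complex.exp (-(Complex.I * ((Real.pi * α * Real.sign τ / 2 : ℝ) : ℂ))))

/-- Half-line stable exponent. -/
noncomputable def gk (α : ℝ) (k : ℂ) (τ : ℝ) : ℂ := Complex.exp (-(k * ((τ ^ α : ℝ) : ℂ)))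

noncomputable def gk1 (α : ℝ) (k : ℂ) (τ : ℝ) : ℂ := -(k * ((α * τ ^ (α - 1) : ℝ) : ℂ)) * gk α k τ

noncomputable def gk2 (α : ℝ) (k : ℂ) (τ : ℝ) : ℂ :=
  -(k * ((α * ((α - 1) * τ ^ (α - 1 - 1)) : ℝ) : ℂ)) * gk α k τ
    + -(k * ((α * τ ^ (α - 1) : ℝ) : ℂ)) * gk1 α k τ

lemma gk_norm (α : ℝ) (k : ℂ) (τ : ℝ) : ‖gk α k τ‖ = Real.exp (-k.re * τ ^ α) := by
  simp only [gk, Complex.norm_exp, Complex.neg_re, Complex.re_mul_ofReal, neg_mul]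

lemma gk_cont {α : ℝ} (hα : 0 < α) (k : ℂ) : Continuous (gk α k) := by
  unfold gk
  have : Continuous fun τ : ℝ => τ ^ α := Real.continuous_rpow_const hα.le
  fun_prop

lemma gk_hasDeriv (α : ℝ) (k : ℂ) {τ : ℝ} (hτ : 0 < τ) : HasDerivAt (gk α k) (gk1 α k τ) τ := by
  have h := ((((Real.hasDerivAt_rpow_const (p := α) (Or.inl hτ.ne')).ofReal_comp).const_mul k).neg).cexp
  refine h.congr_deriv ?_
  simp only [gk1, gk, Pi.neg_apply]
  ring

lemma gk1_hasDeriv (α : ℝ) (k : ℂ) {τ : ℝ} (hτ : 0 < τ) : HasDerivAt (gk1 α k) (gk2 α k τ) τ := by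
  have h := (((((Real.hasDerivAt_rpow_const (p := α - 1) (Or.inl hτ.ne')).const_mul α).ofReal_comp).const_mul k).neg).mul (gk_hasDeriv α k hτ)
  exact h

lemma gk_intOn {α : ℝ} (hα : 0 < α) {k : ℂ} (hk : 0 < k.re) : IntegrableOn (gk α k) (Ioi 0) := by
  have h : IntegrableOn (fun x : ℝ => Real.exp (-k.re * x ^ α)) (Ioi 0) := by
    apply Integrable.of_integral_ne_zero
    rw [integral_exp_neg_mul_rpow hα hk]
    have := Real.Gamma_pos_of_pos (s := 1 / α + 1) (by positivity)
    positivity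
  refine Integrable.mono' h (gk_cont hα k).aestronglyMeasurable ?_
  exact Filter.Eventually.of_forall fun x => (gk_norm α k x).le

lemma gk_norm_le_one (α : ℝ) {k : ℂ} (hk : 0 < k.re) {τ : ℝ} (hτ : 0 ≤ τ) : ‖gk α k τ‖ ≤ 1 := by
  rw [gk_norm, Real.exp_le_one_iff]
  have := mul_nonneg hk.le (Real.rpow_nonneg hτ α)
  linarith

lemma gk_sub_one (α : ℝ) {k : ℂ} (hk : 0 < k.re) {τ : ℝ} (hτ : 0 ≤ τ) :
    ‖gk α k τ - 1‖ ≤ 2 * ‖k‖ * τ ^ α := by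
  have hn : ‖-(k * ((τ ^ α : ℝ) : ℂ))‖ = ‖k‖ * τ ^ α := by
    rw [norm_neg, norm_mul, Complex.norm_real, Real.norm_of_nonneg (Real.rpow_nonneg hτ α)]
  by_cases h : ‖k‖ * τ ^ α ≤ 1
  · have := Complex.norm_exp_sub_one_le (x := -(k * ((τ ^ α : ℝ) : ℂ))) (by rw [hn]; exact h)
    rw [hn] at this
    unfold gk
    linarith
  · have h1 := norm_sub_le (gk α k τ) 1
    have h2 := gk_norm_le_one α hk hτ
    rw [norm_one] at h1
    push Not at h
    linarith

lemma gk1_norm {α : ℝ} (hα : α ∈ Ioo (0:ℝ) 1) {k : ℂ} (hk : 0 < k.re) {τ : ℝ} (hτ : 0 < τ) :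
    ‖gk1 α k τ‖ ≤ ‖k‖ * τ ^ (α - 1) := by
  have h1 := gk_norm_le_one α hk hτ.le
  have hp := Real.rpow_pos_of_pos hτ (α - 1)
  obtain ⟨h0, h0'⟩ := hα
  rw [gk1, norm_mul, norm_neg, norm_mul, Complex.norm_real, Real.norm_of_nonneg (by positivity)]
  calc ‖k‖ * (α * τ ^ (α - 1)) * ‖gk α k τ‖ ≤ ‖k‖ * (1 * τ ^ (α - 1)) * 1 := by gcongr
    _ = _ := by ring

lemma gk2_norm {α : ℝ} (hα : α ∈ Ioo (0:ℝ) 1) {k : ℂ} (hk : 0 < k.re) {τ : ℝ} (hτ : 0 < τ) :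
    ‖gk2 α k τ‖ ≤ (‖k‖ + ‖k‖ ^ 2 / k.re) * τ ^ (α - 2) := by
  have h1 := gk_norm_le_one α hk hτ.le
  have hp := Real.rpow_pos_of_pos hτ (α - 1)
  have hp2 := Real.rpow_pos_of_pos hτ (α - 2)
  have hpa := Real.rpow_pos_of_pos hτ α
  obtain ⟨h0, h0'⟩ := hα
  have e2 : α - 1 - 1 = α - 2 := by ring
  have e3 : τ ^ (α - 1) * τ ^ (α - 1) = τ ^ (α - 2) * τ ^ α := by
    rw [← Real.rpow_add hτ, ← Real.rpow_add hτ]; ring_nf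
  have hx : τ ^ α * ‖gk α k τ‖ ≤ 1 / k.re := by
    rw [gk_norm, neg_mul, Real.exp_neg, le_div_iff₀ hk, ← div_eq_mul_inv, div_mul_eq_mul_div,
      div_le_one (Real.exp_pos _)]
    have := Real.add_one_le_exp (k.re * τ ^ α)
    linarith
  unfold gk2
  refine (norm_add_le _ _).trans ?_
  rw [add_mul]
  apply add_le_add
  · rw [norm_mul, norm_neg, norm_mul, Complex.norm_real, e2, norm_mul, norm_mul,
      Real.norm_of_nonneg h0.le, Real.norm_of_nonneg hp2.le]
    have : ‖α - 1‖ ≤ 1 := by rw [Real.norm_eq_abs, abs_le]; constructor <;> linarith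
    calc ‖k‖ * (α * (‖α - 1‖ * τ ^ (α - 2))) * ‖gk α k τ‖
        ≤ ‖k‖ * (1 * (1 * τ ^ (α - 2))) * 1 := by gcongr
      _ = _ := by ring
  · rw [gk1, norm_mul, norm_mul, norm_neg, norm_mul, Complex.norm_real,
      Real.norm_of_nonneg (by positivity)]
    calc ‖k‖ * (α * τ ^ (α - 1)) * (‖k‖ * (α * τ ^ (α - 1)) * ‖gk α k τ‖)
        = α * α * ‖k‖ ^ 2 * ((τ ^ (α - 1) * τ ^ (α - 1)) * ‖gk α k τ‖) := by ring
      _ = α * α * ‖k‖ ^ 2 * τ ^ (α - 2) * (τ ^ α * ‖gk α k τ‖) := by rw [e3]; ring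
      _ ≤ 1 * 1 * ‖k‖ ^ 2 * τ ^ (α - 2) * (1 / k.re) := by gcongr
      _ = _ := by ring

lemma norm_osc (τ z : ℝ) : ‖Complex.exp (-(Complex.I * τ * z))‖ = 1 := by
  have : -(Complex.I * τ * z) = ((-(τ * z) : ℝ) : ℂ) * Complex.I := by push_cast; ring
  rw [this, Complex.norm_exp_ofReal_mul_I]

lemma osc_cont (z : ℝ) : Continuous fun τ : ℝ => Complex.exp (-(Complex.I * τ * z)) := by fun_prop

lemma osc_int {α : ℝ} (hα : 0 < α) {k : ℂ} (hk : 0 < k.re) (z : ℝ) :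
    IntegrableOn (fun τ : ℝ => Complex.exp (-(Complex.I * τ * z)) * gk α k τ) (Ioi 0) := by
  refine Integrable.mono (gk_intOn hα hk)
    ((osc_cont z).mul (gk_cont hα k)).aestronglyMeasurable ?_
  exact Filter.Eventually.of_forall fun x => by rw [norm_mul, norm_osc, one_mul]

lemma gk2_intOn {α : ℝ} (hα : α ∈ Ioo (0:ℝ) 1) {k : ℂ} (hk : 0 < k.re) (z : ℝ) {δ : ℝ} (hδ : 0 < δ) :
    IntegrableOn (fun τ : ℝ => Complex.exp (-(Complex.I * τ * z)) * gk2 α k τ) (Ioi δ) := by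
  have hm : Measurable (gk2 α k) := by
    have := (gk_cont hα.1 k).measurable
    unfold gk2 gk1
    fun_prop
  have h := (integrableOn_Ioi_rpow_of_lt (a := α - 2) (by linarith [hα.2]) hδ).const_mul
    (‖k‖ + ‖k‖ ^ 2 / k.re)
  refine Integrable.mono' h ((osc_cont z).measurable.mul hm).aestronglyMeasurable ?_
  refine (ae_restrict_iff' measurableSet_Ioi).2 (Filter.Eventually.of_forall fun x hx => ?_)
  rw [norm_mul, norm_osc, one_mul]
  exact gk2_norm hα hk (hδ.trans hx)

lemma gk2_int_bound {α : ℝ} (hα : α ∈ Ioo (0:ℝ) 1) {k : ℂ} (hk : 0 < k.re) (z : ℝ) {δ : ℝ} (hδ : 0 < δ) :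
    ‖∫ τ in Ioi δ, Complex.exp (-(Complex.I * τ * z)) * gk2 α k τ‖ ≤
      (‖k‖ + ‖k‖ ^ 2 / k.re) / (1 - α) * δ ^ (α - 1) := by
  have h := (integrableOn_Ioi_rpow_of_lt (a := α - 2) (by linarith [hα.2]) hδ).const_mul
    (‖k‖ + ‖k‖ ^ 2 / k.re)
  refine (norm_integral_le_of_norm_le h ?_).trans ?_
  · refine (ae_restrict_iff' measurableSet_Ioi).2 (Filter.Eventually.of_forall fun x hx => ?_)
    rw [norm_mul, norm_osc, one_mul]
    exact gk2_norm hα hk (hδ.trans hx)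
  · rw [integral_const_mul, integral_Ioi_rpow_of_lt (by linarith [hα.2]) hδ]
    have e : α - 2 + 1 = α - 1 := by ring
    have e' : (1 - α) = -(α - 1) := by ring
    rw [e, e', div_neg, neg_div, mul_neg, neg_mul, div_mul_eq_mul_div, mul_div_assoc]

lemma tail_eq {α : ℝ} (hα : α ∈ Ioo (0:ℝ) 1) {k : ℂ} (hk : 0 < k.re) {z : ℝ} (hz : z ≠ 0)
    {δ : ℝ} (hδ : 0 < δ) :
    ∫ τ in Ioi δ, Complex.exp (-(Complex.I * τ * z)) * gk α k τ =
      Complex.exp (-(Complex.I * δ * z)) * (gk α k δ / (Complex.I * z) +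
        gk1 α k δ / (Complex.I * z) ^ 2) +
      (∫ τ in Ioi δ, Complex.exp (-(Complex.I * τ * z)) * gk2 α k τ) / (Complex.I * z) ^ 2 := by
  have hJ : Complex.I * (z:ℂ) ≠ 0 := mul_ne_zero Complex.I_ne_zero (by exact_mod_cast hz)
  set J : ℂ := Complex.I * (z:ℂ) with hJd
  have hd : ∀ x : ℝ, 0 < x → HasDerivAt
      (fun τ : ℝ => -(Complex.exp (-(Complex.I * τ * z)) * (gk α k τ / J + gk1 α k τ / J ^ 2)))
      (Complex.exp (-(Complex.I * x * z)) * gk α k x -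
        Complex.exp (-(Complex.I * x * z)) * gk2 α k x / J ^ 2) x := by
    intro x hx
    have h1 : HasDerivAt (fun τ : ℝ => Complex.exp (-(Complex.I * τ * z)))
        (Complex.exp (-(Complex.I * x * z)) * (-(Complex.I * (1:ℝ) * z))) x :=
      ((((hasDerivAt_id x).ofReal_comp.const_mul Complex.I).mul_const (z:ℂ)).neg).cexp
    have h := (h1.mul (((gk_hasDeriv α k hx).div_const J).add
      ((gk1_hasDeriv α k hx).div_const (J^2)))).neg
    refine h.congr_deriv ?_
    have : (-(Complex.I * ((1:ℝ):ℂ) * z)) = -J := by rw [hJd]; push_cast; ring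
    rw [this]
    field_simp
    simp only [Pi.add_apply]
    field_simp
    ring
  have i1 := (osc_int hα.1 hk z).mono_set (Ioi_subset_Ioi hδ.le)
  have i2 := (gk2_intOn hα hk z hδ).div_const (J ^ 2)
  have key := integral_Ioi_of_hasDerivAt_of_tendsto (m := 0) (hd δ hδ).continuousAt.continuousWithinAt
    (fun x hx => hd x (hδ.trans hx)) (i1.sub i2) ?_
  · rw [integral_sub i1 i2, integral_div] at key
    rw [sub_eq_iff_eq_add] at key
    rw [key]
    ring
  · have t1 : Filter.Tendsto (fun τ : ℝ => ‖gk α k τ‖) Filter.atTop (nhds 0) := by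
      simp only [gk_norm]
      refine Real.tendsto_exp_atBot.comp ?_
      exact (tendsto_rpow_atTop hα.1).const_mul_atTop_of_neg (by linarith)
    have t2 : Filter.Tendsto (fun τ : ℝ => ‖k‖ * τ ^ (α - 1)) Filter.atTop (nhds 0) := by
      have := (tendsto_rpow_neg_atTop (y := 1 - α) (by linarith [hα.2])).const_mul ‖k‖
      simpa using this
    have t3 := (t1.div_const ‖J‖).add (t2.div_const (‖J‖ ^ 2))
    simp only [zero_div, add_zero] at t3
    refine squeeze_zero_norm' ?_ t3
    filter_upwards [Filter.eventually_gt_atTop 0] with x hx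
    rw [norm_neg, norm_mul, norm_osc, one_mul]
    refine (norm_add_le _ _).trans ?_
    rw [norm_div, norm_div, norm_pow]
    gcongr
    exact gk1_norm hα hk hx

lemma half_est {α : ℝ} (hα : α ∈ Ioo (0:ℝ) 1) {k : ℂ} (hk : 0 < k.re) :
    ∃ C : ℝ, 0 ≤ C ∧ ∀ z : ℝ, z ≠ 0 →
      ‖(∫ τ in Ioi (0:ℝ), Complex.exp (-(Complex.I * τ * z)) * gk α k τ) - 1 / (Complex.I * z)‖
        ≤ C * |z| ^ (-(1 + α)) := by
  have h1α : 0 < 1 - α := by linarith [hα.2]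
  refine ⟨2 * ‖k‖ + 2 * ‖k‖ + ‖k‖ + (‖k‖ + ‖k‖ ^ 2 / k.re) / (1 - α), by positivity, ?_⟩
  intro z hz
  have hzp : 0 < |z| := abs_pos.2 hz
  have hJ : Complex.I * (z:ℂ) ≠ 0 := mul_ne_zero Complex.I_ne_zero (by exact_mod_cast hz)
  obtain ⟨δ, hδd⟩ : ∃ δ, δ = |z|⁻¹ := ⟨_, rfl⟩
  have hδ : 0 < δ := by rw [hδd]; positivity
  have hJn : ‖Complex.I * (z:ℂ)‖ = δ⁻¹ := by rw [hδd]; simp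
  have i0 := osc_int hα.1 hk z
  have split : ∫ τ in Ioi (0:ℝ), Complex.exp (-(Complex.I * τ * z)) * gk α k τ =
      (∫ τ in Ioc (0:ℝ) δ, Complex.exp (-(Complex.I * τ * z)) * gk α k τ) +
      ∫ τ in Ioi δ, Complex.exp (-(Complex.I * τ * z)) * gk α k τ := by
    rw [← setIntegral_union (Ioc_disjoint_Ioi le_rfl) measurableSet_Ioi
      (i0.mono_set Ioc_subset_Ioi_self) (i0.mono_set (Ioi_subset_Ioi hδ.le)),
      Ioc_union_Ioi_eq_Ioi hδ.le]
  have ie : IntegrableOn (fun τ : ℝ => Complex.exp (-(Complex.I * τ * z))) (Ioc 0 δ) :=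
    ((osc_cont z).integrableOn_Icc).mono_set Ioc_subset_Icc_self
  have s2 : ∫ τ in Ioc (0:ℝ) δ, Complex.exp (-(Complex.I * τ * z)) * gk α k τ =
      (∫ τ in Ioc (0:ℝ) δ, Complex.exp (-(Complex.I * τ * z)) * (gk α k τ - 1)) +
      ∫ τ in Ioc (0:ℝ) δ, Complex.exp (-(Complex.I * τ * z)) := by
    rw [← integral_add _ ie]
    · congr 1; ext τ; ring
    · have := (i0.mono_set (Ioc_subset_Ioi_self : Ioc 0 δ ⊆ Ioi 0)).sub ie
      refine this.congr (Filter.Eventually.of_forall fun τ => ?_)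
      simp only [Pi.sub_apply]; ring
  have s3 : ∫ τ in Ioc (0:ℝ) δ, Complex.exp (-(Complex.I * τ * z)) =
      (1 - Complex.exp (-(Complex.I * δ * z))) / (Complex.I * z) := by
    rw [← intervalIntegral.integral_of_le hδ.le]
    have e : ∀ τ : ℝ, -(Complex.I * τ * z) = -(Complex.I * z) * τ := fun τ => by ring
    simp only [e]
    rw [integral_exp_mul_complex (neg_ne_zero.2 hJ)]
    simp only [Complex.ofReal_zero, mul_zero, Complex.exp_zero]
    rw [div_neg, ← neg_div, neg_sub]
  have b1 : ‖∫ τ in Ioc (0:ℝ) δ, Complex.exp (-(Complex.I * τ * z)) * (gk α k τ - 1)‖ ≤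
      2 * ‖k‖ * δ ^ α * δ := by
    have := norm_setIntegral_le_of_norm_le_const (μ := volume) (s := Ioc (0:ℝ) δ)
      (f := fun τ : ℝ => Complex.exp (-(Complex.I * τ * z)) * (gk α k τ - 1))
      (C := 2 * ‖k‖ * δ ^ α) (by simp) (fun x hx => by
        rw [norm_mul, norm_osc, one_mul]
        refine (gk_sub_one α hk hx.1.le).trans ?_
        have := Real.rpow_le_rpow hx.1.le hx.2 hα.1.le
        gcongr)
    simpa [hδ.le] using this
  rw [split, s2, s3, tail_eq hα hk hz hδ]
  have b2 := gk_sub_one α hk hδ.le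
  have b3 := gk1_norm hα hk hδ
  have b4 := gk2_int_bound hα hk z hδ
  have hE := norm_osc δ z
  generalize (∫ τ in Ioi δ, Complex.exp (-(Complex.I * τ * z)) * gk2 α k τ) = R2 at *
  generalize (∫ τ in Ioc (0:ℝ) δ, Complex.exp (-(Complex.I * τ * z)) * (gk α k τ - 1)) = R1 at *
  generalize Complex.exp (-(Complex.I * δ * z)) = E at *
  generalize Complex.I * (z:ℂ) = J at *
  have hz' : |z| ^ (-(1 + α)) = δ ^ (1 + α) := by
    rw [hδd, Real.rpow_neg hzp.le, Real.inv_rpow hzp.le]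
  have e1 : δ ^ (1 + α) = δ ^ α * δ := by rw [add_comm, Real.rpow_add hδ, Real.rpow_one]
  have e2 : δ ^ (1 + α) = δ ^ (α - 1) * δ ^ 2 := by
    rw [← Real.rpow_natCast, ← Real.rpow_add hδ]; congr 1; push_cast; ring
  have id : R1 + (1 - E) / J + (E * (gk α k δ / J + gk1 α k δ / J ^ 2) + R2 / J ^ 2) - 1 / J =
      R1 + E * (gk α k δ - 1) / J + E * gk1 α k δ / J ^ 2 + R2 / J ^ 2 := by ring
  rw [id, hz']
  refine (norm_add₄_le).trans ?_
  rw [norm_div, norm_div, norm_div, norm_mul, norm_mul, norm_pow, hE, hJn, one_mul, one_mul,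
    inv_pow, div_inv_eq_mul, div_inv_eq_mul, div_inv_eq_mul]
  have c2 : ‖gk α k δ - 1‖ * δ ≤ 2 * ‖k‖ * δ ^ α * δ := by gcongr
  have c3 : ‖gk1 α k δ‖ * δ ^ 2 ≤ ‖k‖ * δ ^ (α - 1) * δ ^ 2 := by gcongr
  have c4 : ‖R2‖ * δ ^ 2 ≤ (‖k‖ + ‖k‖ ^ 2 / k.re) / (1 - α) * δ ^ (α - 1) * δ ^ 2 := by gcongr
  have f1 : 2 * ‖k‖ * δ ^ α * δ = 2 * ‖k‖ * δ ^ (1 + α) := by rw [e1]; ring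
  have f3 : ‖k‖ * δ ^ (α - 1) * δ ^ 2 = ‖k‖ * δ ^ (1 + α) := by rw [e2]; ring
  have f4 : (‖k‖ + ‖k‖ ^ 2 / k.re) / (1 - α) * δ ^ (α - 1) * δ ^ 2 =
    (‖k‖ + ‖k‖ ^ 2 / k.re) / (1 - α) * δ ^ (1 + α) := by rw [e2]; ring
  rw [f1] at b1 c2
  rw [f3] at c3
  rw [f4] at c4
  linarith

noncomputable def phis (α s τ : ℝ) : ℂ :=
  Complex.exp (-(((s * |τ| ^ α : ℝ) : ℂ) *
        Complex.exp (-(Complex.I * ((Real.pi * α * Real.sign τ / 2 : ℝ) : ℂ)))))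

noncomputable def kp (α s : ℝ) : ℂ := s * Complex.exp (((-(Real.pi * α / 2) : ℝ) : ℂ) * Complex.I)
noncomputable def km (α s : ℝ) : ℂ := s * Complex.exp (((Real.pi * α / 2 : ℝ) : ℂ) * Complex.I)

lemma cos_pos' {α : ℝ} (hα : α ∈ Ioo (0:ℝ) 1) : 0 < Real.cos (Real.pi * α / 2) := by
  apply Real.cos_pos_of_mem_Ioo
  have := Real.pi_pos
  obtain ⟨h0, h1⟩ := hα
  constructor
  · have : 0 < Real.pi * α := by positivity
    linarith
  · nlinarith

lemma kp_re {α s : ℝ} (hα : α ∈ Ioo (0:ℝ) 1) (hs : 0 < s) : 0 < (kp α s).re := by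
  rw [kp, Complex.re_ofReal_mul, Complex.exp_ofReal_mul_I_re, Real.cos_neg]
  exact mul_pos hs (cos_pos' hα)

lemma km_re {α s : ℝ} (hα : α ∈ Ioo (0:ℝ) 1) (hs : 0 < s) : 0 < (km α s).re := by
  rw [km, Complex.re_ofReal_mul, Complex.exp_ofReal_mul_I_re]
  exact mul_pos hs (cos_pos' hα)

lemma phis_pos {α : ℝ} (hα : 0 < α) (s : ℝ) {τ : ℝ} (hτ : 0 ≤ τ) : phis α s τ = gk α (kp α s) τ := by
  rcases hτ.eq_or_lt with rfl | h
  · simp [phis, gk, Real.zero_rpow hα.ne']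
  · rw [phis, gk, kp, Real.sign_of_pos h, abs_of_pos h]
    congr 2
    rw [show -(Complex.I * ((Real.pi * α * 1 / 2 : ℝ) : ℂ)) =
      ((-(Real.pi * α / 2) : ℝ) : ℂ) * Complex.I by push_cast; ring]
    push_cast; ring

lemma phis_neg {α : ℝ} (hα : 0 < α) (s : ℝ) {τ : ℝ} (hτ : τ ≤ 0) :
    phis α s τ = gk α (km α s) (-τ) := by
  rcases hτ.eq_or_lt with rfl | h
  · simp [phis, gk, Real.zero_rpow hα.ne']
  · rw [phis, gk, km, Real.sign_of_neg h, abs_of_neg h]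
    congr 2
    rw [show -(Complex.I * ((Real.pi * α * (-1) / 2 : ℝ) : ℂ)) =
      ((Real.pi * α / 2 : ℝ) : ℂ) * Complex.I by push_cast; ring]
    push_cast; ring

lemma phis_cont {α : ℝ} (hα : 0 < α) (s : ℝ) : Continuous (phis α s) := by
  have e : phis α s = fun τ => if 0 ≤ τ then gk α (kp α s) τ else gk α (km α s) (-τ) := by
    ext τ
    split_ifs with h
    · exact phis_pos hα s h
    · exact phis_neg hα s (not_le.1 h).le
  rw [e]
  refine Continuous.if_le (gk_cont hα _) ((gk_cont hα _).comp continuous_neg) continuous_const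
    continuous_id ?_
  rintro x rfl
  rw [← phis_pos hα s le_rfl, ← phis_neg hα s le_rfl]

lemma phis_int {α s : ℝ} (hα : α ∈ Ioo (0:ℝ) 1) (hs : 0 < s) : Integrable (phis α s) := by
  rw [← integrableOn_univ, ← Iic_union_Ioi (a := (0:ℝ))]
  refine IntegrableOn.union ?_ ?_
  · have h : IntegrableOn (gk α (km α s)) (Ici (-0)) := by
      rw [neg_zero, integrableOn_Ici_iff_integrableOn_Ioi]
      exact gk_intOn hα.1 (km_re hα hs)
    exact h.comp_neg_Iic.congr_fun (fun x hx => (phis_neg hα.1 s hx).symm) measurableSet_Iic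
  · exact (gk_intOn hα.1 (kp_re hα hs)).congr_fun
      (fun x hx => (phis_pos hα.1 s (le_of_lt hx)).symm) measurableSet_Ioi

/-- The unnormalised transform. -/
noncomputable def Hs (α s z : ℝ) : ℂ := ∫ τ : ℝ, Complex.exp (-(Complex.I * τ * z)) * phis α s τ

lemma hstable_eq (α s z : ℝ) : hstable α s z = ((2 * Real.pi)⁻¹ : ℝ) * Hs α s z := by
  rw [hstable, Hs]
  congr 2
  ext τ
  rw [phis, ← Complex.exp_add, sub_eq_add_neg]

lemma Hs_int {α s : ℝ} (hα : α ∈ Ioo (0:ℝ) 1) (hs : 0 < s) (z : ℝ) :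
    Integrable (fun τ : ℝ => Complex.exp (-(Complex.I * τ * z)) * phis α s τ) := by
  refine Integrable.mono (phis_int hα hs)
    ((osc_cont z).mul (phis_cont hα.1 s)).aestronglyMeasurable ?_
  exact Filter.Eventually.of_forall fun x => by rw [norm_mul, norm_osc, one_mul]

lemma Hs_split {α s : ℝ} (hα : α ∈ Ioo (0:ℝ) 1) (hs : 0 < s) (z : ℝ) :
    Hs α s z = (∫ τ in Ioi (0:ℝ), Complex.exp (-(Complex.I * τ * (-z : ℝ))) * gk α (km α s) τ) +
      ∫ τ in Ioi (0:ℝ), Complex.exp (-(Complex.I * τ * z)) * gk α (kp α s) τ := by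
  rw [Hs, ← intervalIntegral.integral_Iic_add_Ioi (b := 0) (Hs_int hα hs z).integrableOn
    (Hs_int hα hs z).integrableOn]
  congr 1
  · have := integral_comp_neg_Ioi 0 (fun τ : ℝ => Complex.exp (-(Complex.I * τ * z)) * phis α s τ)
    rw [neg_zero] at this
    rw [← this]
    refine setIntegral_congr_fun measurableSet_Ioi fun x hx => ?_
    have hx' : -x ≤ 0 := by have : 0 < x := hx; linarith
    simp only [phis_neg hα.1 s hx', neg_neg]
    push_cast
    ring_nf
  · refine setIntegral_congr_fun measurableSet_Ioi fun x hx => ?_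
    simp only [phis_pos hα.1 s (le_of_lt hx)]

lemma Hs_decay {α s : ℝ} (hα : α ∈ Ioo (0:ℝ) 1) (hs : 0 < s) :
    ∃ C : ℝ, 0 ≤ C ∧ ∀ z : ℝ, z ≠ 0 → ‖Hs α s z‖ ≤ C * |z| ^ (-(1 + α)) := by
  obtain ⟨C1, h1, H1⟩ := half_est hα (km_re hα hs)
  obtain ⟨C2, h2, H2⟩ := half_est hα (kp_re hα hs)
  refine ⟨C1 + C2, by positivity, fun z hz => ?_⟩
  have a := H1 (-z) (neg_ne_zero.2 hz)
  have b := H2 z hz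
  rw [abs_neg] at a
  rw [Hs_split hα hs, add_mul]
  refine le_trans (le_of_eq ?_) ((norm_add_le _ _).trans (add_le_add a b))
  congr 1
  push_cast
  rw [mul_neg Complex.I, div_neg]
  ring

lemma Hs_fourier (α s z : ℝ) :
    FourierTransform.fourier (phis α s) z = Hs α s (2 * Real.pi * z) := by
  rw [Real.fourier_real_eq_integral_exp_smul, Hs]
  congr 1
  ext τ
  rw [smul_eq_mul]
  congr 2
  push_cast; ring

lemma Hs_cont {α s : ℝ} (hα : α ∈ Ioo (0:ℝ) 1) (hs : 0 < s) : Continuous (Hs α s) := by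
  refine continuous_of_dominated (bound := fun τ => ‖phis α s τ‖)
    (fun z => (Hs_int hα hs z).aestronglyMeasurable) ?_ (phis_int hα hs).norm ?_
  · intro z
    exact Filter.Eventually.of_forall fun x => by rw [norm_mul, norm_osc, one_mul]
  · exact Filter.Eventually.of_forall fun x => by fun_prop

lemma Hs_integrable {α s : ℝ} (hα : α ∈ Ioo (0:ℝ) 1) (hs : 0 < s) : Integrable (Hs α s) := by
  obtain ⟨C, hC, H⟩ := Hs_decay hα hs
  set M := ∫ τ : ℝ, ‖phis α s τ‖ with hM
  have hM0 : 0 ≤ M := integral_nonneg fun _ => norm_nonneg _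
  have hb : ∀ z, ‖Hs α s z‖ ≤ M := fun z => by
    refine (norm_integral_le_integral_norm _).trans (le_of_eq ?_)
    simp only [norm_mul, norm_osc, one_mul, hM]
  have hi := (integrable_one_add_norm (E := ℝ) (μ := volume) (r := 1 + α)
    (by simpa using hα.1)).const_mul ((M + C) * 2 ^ (1 + α))
  have hα0 := hα.1
  refine Integrable.mono' hi (Hs_cont hα hs).aestronglyMeasurable
    (Filter.Eventually.of_forall fun z => ?_)
  rw [Real.norm_eq_abs]
  have hp : 0 < 1 + |z| := by positivity
  rw [Real.rpow_neg hp.le, mul_assoc, ← div_eq_mul_inv, ← Real.div_rpow (by norm_num) hp.le]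
  rcases le_total |z| 1 with h | h
  · have : 1 ≤ (2 / (1 + |z|)) ^ (1 + α) :=
      Real.one_le_rpow (by rw [le_div_iff₀ hp]; linarith) (by linarith)
    calc ‖Hs α s z‖ ≤ M := hb z
      _ ≤ (M + C) * 1 := by linarith
      _ ≤ _ := by gcongr
  · have hz : 0 < |z| := by linarith
    have : |z| ^ (-(1 + α)) ≤ (2 / (1 + |z|)) ^ (1 + α) := by
      rw [Real.rpow_neg hz.le, ← Real.inv_rpow hz.le]
      refine Real.rpow_le_rpow (by positivity) ?_ (by linarith)
      rw [le_div_iff₀ hp, inv_mul_le_iff₀ hz]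
      linarith
    calc ‖Hs α s z‖ ≤ C * |z| ^ (-(1 + α)) := H z (abs_pos.1 hz)
      _ ≤ (M + C) * |z| ^ (-(1 + α)) := by gcongr; linarith
      _ ≤ _ := by gcongr

/-- Characteristic function of the positively skewed `α`-stable law:
`∫_ℝ e^{iθz} h_α(z,s) dz = exp(−s|θ|^α e^{−iπα·sgn(θ)/2}) (= e^{−s(−iθ)^α})`. -/
theorem stmt13 (α s θ : ℝ) (hα : α ∈ Set.Ioo (0 : ℝ) 1) (hs : 0 < s) :
    Integrable (fun z : ℝ => Complex.exp (Complex.I * θ * z) * hstable α s z) ∧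
    ∫ z : ℝ, Complex.exp (Complex.I * θ * z) * hstable α s z =
      Complex.exp (-((s * |θ| ^ α : ℝ) : ℂ) *
        Complex.exp (-(Complex.I * ((Real.pi * α * Real.sign θ / 2 : ℝ) : ℂ)))) := by
  have hi := Hs_integrable hα hs
  have hfun : (fun z : ℝ => Complex.exp (Complex.I * θ * z) * hstable α s z) =
      fun z : ℝ => ((2 * Real.pi)⁻¹ : ℝ) * (Complex.exp (Complex.I * θ * z) * Hs α s z) := by
    ext z; rw [hstable_eq]; ring
  have hn : ∀ z : ℝ, ‖Complex.exp (Complex.I * θ * z)‖ = 1 := fun z => by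
    have := norm_osc (-θ) z
    push_cast at this
    simpa using this
  have hi2 : Integrable (fun z : ℝ => Complex.exp (Complex.I * θ * z) * Hs α s z) := by
    refine hi.mono (Continuous.aestronglyMeasurable ?_)
      (Filter.Eventually.of_forall fun z => by rw [norm_mul, hn, one_mul])
    exact (by fun_prop : Continuous fun z : ℝ => Complex.exp (Complex.I * θ * z)).mul (Hs_cont hα hs)
  rw [hfun]
  refine ⟨hi2.const_mul _, ?_⟩
  have hF : FourierTransform.fourier (phis α s) = fun z => Hs α s (2 * Real.pi * z) := by
    ext z; exact Hs_fourier α s z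
  have h2 : (2 * Real.pi) ≠ 0 := by positivity
  have inv := congrFun ((phis_cont hα.1 s).fourierInv_fourier_eq (phis_int hα hs)
    (by rw [hF]; exact hi.comp_mul_left' h2)) θ
  rw [hF, Real.fourierInv_eq'] at inv
  have hsc := Measure.integral_comp_mul_left
    (fun z : ℝ => Complex.exp (Complex.I * θ * z) * Hs α s z) (2 * Real.pi)
  rw [integral_const_mul]
  rw [abs_of_pos (by positivity), Complex.real_smul] at hsc
  rw [← hsc]
  have hR : phis α s θ = Complex.exp (-((s * |θ| ^ α : ℝ) : ℂ) *
        Complex.exp (-(Complex.I * ((Real.pi * α * Real.sign θ / 2 : ℝ) : ℂ)))) := by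
    rw [phis, neg_mul]
  rw [← hR, ← inv]
  congr 1
  ext v
  rw [smul_eq_mul]
  congr 2
  simp only [RCLike.inner_apply, conj_trivial]
  push_cast
  ring
end

section
/- For all real p > 0, ν > 0, a > 0, b > 0, the function x ↦ x^{ν−1} exp(−b x^p − a x^{−p}) is integrable on (0,∞) and ∫₀^∞ x^{ν−1} exp(−b x^p − a x^{−p}) dx = (1/p) (a/b)^{ν/(2p)} ∫₀^∞ t^{ν/p − 1} exp(−√(ab)·(t + 1/t)) dt. -/
open MeasureTheory Set Real

/-- Bessel-free form of Gradshteyn–Ryzhik formula 3.478: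
`∫₀^∞ x^{ν−1} exp(−b x^p − a x^{−p}) dx
  = (1/p)(a/b)^{ν/(2p)} ∫₀^∞ t^{ν/p−1} exp(−√(ab)(t + 1/t)) dt`. -/
theorem stmt19 (p ν a b : ℝ) (hp : 0 < p) (hν : 0 < ν) (ha : 0 < a) (hb : 0 < b) :
    IntegrableOn (fun x : ℝ => x ^ (ν - 1) * Real.exp (-b * x ^ p - a * x ^ (-p)))
      (Set.Ioi 0) ∧
    ∫ x in Set.Ioi (0 : ℝ), x ^ (ν - 1) * Real.exp (-b * x ^ p - a * x ^ (-p)) =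
      (1 / p) * (a / b) ^ (ν / (2 * p)) *
        ∫ t in Set.Ioi (0 : ℝ),
          t ^ (ν / p - 1) * Real.exp (-Real.sqrt (a * b) * (t + 1 / t)) := by
  constructor
  · have h0 := integrableOn_rpow_mul_exp_neg_mul_rpow (s := ν - 1) (by linarith) hp hb
    refine Integrable.mono' h0 ?_ ?_
    · exact Measurable.aestronglyMeasurable (by fun_prop)
    · refine (ae_restrict_iff' measurableSet_Ioi).2 (Filter.Eventually.of_forall fun x hx => ?_)
      have hx : 0 < x := hx
      have h1 : 0 < x ^ (-p) := rpow_pos_of_pos hx _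
      have h2 : 0 < x ^ (ν - 1) := rpow_pos_of_pos hx _
      rw [Real.norm_of_nonneg (by positivity)]
      gcongr
      nlinarith [mul_pos ha h1]
  · obtain ⟨c, hc, hcb⟩ : ∃ c : ℝ, 0 < c ∧ c ^ 2 = b / a :=
      ⟨√(b / a), by positivity, Real.sq_sqrt (by positivity)⟩
    have hb' : b = c ^ 2 * a := by rw [hcb]; field_simp
    have hs : √(a * b) = c * a := by
      rw [hb', show a * (c ^ 2 * a) = (c * a) ^ 2 by ring, Real.sqrt_sq (by positivity)]
    have hab : (a / b) ^ (ν / (2 * p)) = (c ^ (ν / p))⁻¹ := by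
      have : a / b = c ^ (-2 : ℝ) := by
        rw [rpow_neg hc.le, rpow_two, hcb, inv_div]
      rw [this, ← rpow_mul hc.le, ← rpow_neg hc.le]
      congr 1
      field_simp
    have hcp : 0 < c ^ (ν / p) := rpow_pos_of_pos hc _
    have h1 := integral_comp_mul_left_Ioi
      (fun t : ℝ => t ^ (ν / p - 1) * Real.exp (-Real.sqrt (a * b) * (t + 1 / t))) 0 hc
    have h2 := integral_comp_rpow_Ioi_of_pos (g := fun t : ℝ =>
      (c * t) ^ (ν / p - 1) * Real.exp (-Real.sqrt (a * b) * (c * t + 1 / (c * t)))) hp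
    rw [mul_zero, smul_eq_mul] at h1
    have h3 : ∫ t in Ioi (0 : ℝ), t ^ (ν / p - 1) * Real.exp (-Real.sqrt (a * b) * (t + 1 / t))
        = c * ∫ x in Ioi (0 : ℝ), (p * x ^ (p - 1)) • ((c * x ^ p) ^ (ν / p - 1) *
          Real.exp (-Real.sqrt (a * b) * (c * x ^ p + 1 / (c * x ^ p)))) := by
      rw [h2, h1]
      field_simp
    rw [h3, hab, ← integral_const_mul, ← integral_const_mul]
    refine setIntegral_congr_fun measurableSet_Ioi fun x hx => ?_
    have hx : 0 < x := hx
    have hxp : 0 < x ^ p := rpow_pos_of_pos hx _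
    have e1 : -√(a * b) * (c * x ^ p + 1 / (c * x ^ p)) = -b * x ^ p - a * x ^ (-p) := by
      rw [hs, rpow_neg hx.le, hb']
      field_simp
      ring
    have e2 : x ^ (p - 1) * (c * x ^ p) ^ (ν / p - 1) = c ^ (ν / p) / c * x ^ (ν - 1) := by
      rw [mul_rpow hc.le hxp.le, ← rpow_mul hx.le, rpow_sub_one hc.ne', mul_left_comm,
        ← rpow_add hx]
      congr 2
      field_simp
      ring
    simp only [smul_eq_mul]
    rw [e1]
    calc _ = 1 / p * (c ^ (ν / p))⁻¹ * (c * (p * (c ^ (ν / p) / c * x ^ (ν - 1)) *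
          rexp (-b * x ^ p - a * x ^ (-p)))) := by field_simp
      _ = _ := by rw [← e2]; ring
end
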